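/- arXiv:1107.2006 — 13 statements merged into one kernel-verified Lean document; each statement's English description precedes it below -/
import Mathlib

section
/- Let F be a finite-dimensional real vector space with dual F*. A linear subspace D ⊆ F × F* is a Dirac structure (i.e. D equals its orthogonal complement with respect to the indefinite form ⟪(f_a,e_a),(f_b,e_b)⟫ = e_a(f_b) + e_b(f_a)) if and only if the following two conditions hold: (i) e(f) = 0 for every (f,e) ∈ D, and (ii) dim D = dim F. -/
/-!
The pairing on `F × F*` is nondegenerate, so `dim D + dim Dᗮ = dim (F × F*) = 2 dim F` for every
subspace `D`. The pairing is symmetric with `⟪x, x⟫ = 2 e(f)` for `x = (f, e)`, so by polarization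
`e(f) = 0` on `D` is the same as `D ≤ Dᗮ`. Hence `D = Dᗮ` gives isotropy and `2 dim D = 2 dim F`,
while isotropy together with `dim D = dim F` gives `D ≤ Dᗮ` between spaces of equal dimension.
-/

/-- The indefinite pairing `⟪(f_a, e_a), (f_b, e_b)⟫ = e_a(f_b) + e_b(f_a)` on `F × F*`. -/
def diracPairing (F : Type*) [AddCommGroup F] [Module ℝ F] :
    LinearMap.BilinForm ℝ (F × Module.Dual ℝ F) :=
  LinearMap.mk₂ ℝ (fun x y => x.2 y.1 + y.2 x.1)
    (fun x x' y => by simp; ring) (fun c x y => by simp; ring)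
    (fun x y y' => by simp; ring) (fun c x y => by simp; ring)

lemma diracPairing_apply {F : Type*} [AddCommGroup F] [Module ℝ F]
    (x y : F × Module.Dual ℝ F) : diracPairing F x y = x.2 y.1 + y.2 x.1 := rfl

lemma diracPairing_ker (F : Type*) [AddCommGroup F] [Module ℝ F] :
    (diracPairing F).ker = ⊥ := by
  rw [LinearMap.ker_eq_bot']
  rintro ⟨f, e⟩ h
  have key : ∀ y : F × Module.Dual ℝ F, e y.1 + y.2 f = 0 := fun y => by
    rw [← diracPairing_apply (f, e) y, h]
    rfl
  have hf : f = 0 := (Module.forall_dual_apply_eq_zero_iff ℝ f).1 fun φ => by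
    simpa using key (0, φ)
  have he : e = 0 := LinearMap.ext fun v => by simpa using key (v, 0)
  rw [hf, he]
  rfl

lemma mem_diracPairing_orthogonal {F : Type*} [AddCommGroup F] [Module ℝ F]
    (D : Submodule ℝ (F × Module.Dual ℝ F)) (x : F × Module.Dual ℝ F) :
    x ∈ (diracPairing F).orthogonal D ↔ ∀ y ∈ D, x.2 y.1 + y.2 x.1 = 0 := by
  simp only [LinearMap.BilinForm.mem_orthogonal_iff, diracPairing_apply, add_comm]

lemma finrank_add_finrank_diracPairing_orthogonal {F : Type*} [AddCommGroup F] [Module ℝ F]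
    [FiniteDimensional ℝ F] (D : Submodule ℝ (F × Module.Dual ℝ F)) :
    Module.finrank ℝ D + Module.finrank ℝ ((diracPairing F).orthogonal D) =
      2 * Module.finrank ℝ F := by
  rw [LinearMap.BilinForm.finrank_add_finrank_orthogonal', diracPairing_ker, inf_bot_eq,
    finrank_bot, Module.finrank_prod, Subspace.dual_finrank_eq]
  ring

/-- A subspace `D ⊆ F × F*` of a finite-dimensional real vector space `F` with its dual
is a Dirac structure (i.e. it equals its orthogonal complement with respect to the
indefinite form `⟪(f_a,e_a),(f_b,e_b)⟫ = e_a(f_b) + e_b(f_a)`) if and only if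
(i) `e(f) = 0` for every `(f,e) ∈ D`, and (ii) `dim D = dim F`. -/
theorem dirac_iff_isotropic_and_dim
    (F : Type*) [AddCommGroup F] [Module ℝ F] [FiniteDimensional ℝ F]
    (D : Submodule ℝ (F × Module.Dual ℝ F)) :
    (∀ x : F × Module.Dual ℝ F, x ∈ D ↔ ∀ y ∈ D, x.2 y.1 + y.2 x.1 = 0) ↔
      ((∀ x ∈ D, x.2 x.1 = 0) ∧ Module.finrank ℝ D = Module.finrank ℝ F) := by
  have hdim := finrank_add_finrank_diracPairing_orthogonal D
  constructor
  · intro h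
    have hD : (diracPairing F).orthogonal D = D :=
      Submodule.ext fun x => (mem_diracPairing_orthogonal D x).trans (h x).symm
    rw [hD] at hdim
    refine ⟨fun x hx => ?_, by lia⟩
    have := (h x).1 hx x hx
    linarith
  · rintro ⟨hiso, hrank⟩
    have hle : D ≤ (diracPairing F).orthogonal D := fun x hx => by
      rw [mem_diracPairing_orthogonal]
      intro y hy
      -- Polarization: expand `e(f) = 0` at `x + y`.
      have hxy := hiso (x + y) (D.add_mem hx hy)
      simp only [Prod.fst_add, Prod.snd_add, LinearMap.add_apply, map_add] at hxy
      linarith [hiso x hx, hiso y hy]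
    have hrank' : Module.finrank ℝ D = Module.finrank ℝ ((diracPairing F).orthogonal D) := by
      omega
    have hD : D = (diracPairing F).orthogonal D :=
      Submodule.eq_of_le_of_finrank_eq hle hrank'
    intro x
    rw [← mem_diracPairing_orthogonal, ← hD]
end

section
/- Let D ⊆ F × F* be a Dirac structure on a finite-dimensional real vector space F. Define F₀ = {f ∈ F : (f,0) ∈ D}, F₁ = {f ∈ F : ∃ e ∈ F*, (f,e) ∈ D}, E₀ = {e ∈ F* : (0,e) ∈ D}, and E₁ = {e ∈ F* : ∃ f ∈ F, (f,e) ∈ D}. Then E₁ = F₀^⊥ and E₀ = F₁^⊥, where ⊥ denotes the annihilator in F*. -/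
/-- For a Dirac structure `D ⊆ F × F*`, with `F₀ = {f : (f,0) ∈ D}`,
`F₁ = {f : ∃ e, (f,e) ∈ D}`, `E₀ = {e : (0,e) ∈ D}`, `E₁ = {e : ∃ f, (f,e) ∈ D}`,
one has `E₁ = F₀^⊥` and `E₀ = F₁^⊥` (annihilators in `F*`). -/
theorem dirac_annihilators
    (F : Type*) [AddCommGroup F] [Module ℝ F] [FiniteDimensional ℝ F]
    (D : Submodule ℝ (F × Module.Dual ℝ F))
    (hD : ∀ x : F × Module.Dual ℝ F, x ∈ D ↔ ∀ y ∈ D, x.2 y.1 + y.2 x.1 = 0) :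
    D.map (LinearMap.snd ℝ F (Module.Dual ℝ F)) =
        (D.comap (LinearMap.inl ℝ F (Module.Dual ℝ F))).dualAnnihilator ∧
      D.comap (LinearMap.inr ℝ F (Module.Dual ℝ F)) =
        (D.map (LinearMap.fst ℝ F (Module.Dual ℝ F))).dualAnnihilator := by
  constructor
  · -- Pairing `(f, 0)` with `D` shows `F₀` is the coannihilator of `E₁`; finite-dimensional
    -- biduality then turns this into `E₁ = F₀^⊥`.
    have h : D.comap (LinearMap.inl ℝ F (Module.Dual ℝ F)) =
        (D.map (LinearMap.snd ℝ F (Module.Dual ℝ F))).dualCoannihilator := by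
      ext f
      rw [Submodule.mem_comap, hD, Submodule.mem_dualCoannihilator]
      simp only [LinearMap.coe_inl, LinearMap.zero_apply, zero_add, Prod.forall,
        Submodule.mem_map, LinearMap.snd_apply, Prod.exists, exists_eq_right]
      exact ⟨fun h φ ⟨x, hx⟩ ↦ h x φ hx, fun h x φ hx ↦ h φ ⟨x, hx⟩⟩
    rw [h, Subspace.dualCoannihilator_dualAnnihilator_eq]
  · -- Pairing `(0, e)` with `D` leaves only the values of `e` on `F₁`.
    ext e
    rw [Submodule.mem_comap, hD, Submodule.mem_dualAnnihilator]
    simp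
end

section
/- Let D ⊆ F × F* be a separable Dirac structure on a finite-dimensional real vector space F, i.e. a Dirac structure such that e_a(f_b) = 0 for all (f_a,e_a),(f_b,e_b) ∈ D. Then D = K × K^⊥, where K = {f ∈ F : (f,0) ∈ D} and K^⊥ is the annihilator of K in F*. -/
/-- A separable Dirac structure `D ⊆ F × F*` equals `K × K^⊥`,
where `K = {f : (f,0) ∈ D}` and `K^⊥` is the annihilator of `K` in `F*`. -/
theorem separable_dirac_eq_prod
    (F : Type*) [AddCommGroup F] [Module ℝ F] [FiniteDimensional ℝ F]
    (D : Submodule ℝ (F × Module.Dual ℝ F))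
    (hD : ∀ x : F × Module.Dual ℝ F, x ∈ D ↔ ∀ y ∈ D, x.2 y.1 + y.2 x.1 = 0)
    (hsep : ∀ x ∈ D, ∀ y ∈ D, x.2 y.1 = 0) :
    D = (D.comap (LinearMap.inl ℝ F (Module.Dual ℝ F))).prod
        (D.comap (LinearMap.inl ℝ F (Module.Dual ℝ F))).dualAnnihilator := by
  -- Separability says that `(x.1, 0)` is orthogonal to all of `D`, so `D` is closed under
  -- the projection to the first factor.
  have hfst : ∀ x ∈ D, ((x.1, 0) : F × Module.Dual ℝ F) ∈ D := fun x hx =>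
    (hD _).2 fun y hy => by simpa using hsep y hy x hx
  ext x
  simp only [Submodule.mem_prod, Submodule.mem_comap, LinearMap.inl_apply,
    Submodule.mem_dualAnnihilator]
  constructor
  · intro hx
    exact ⟨hfst x hx, fun f hf => hsep x hx _ hf⟩
  · rintro ⟨hf, he⟩
    refine (hD x).2 fun y hy => ?_
    have h1 : x.2 y.1 = 0 := he _ (hfst y hy)
    have h2 : y.2 x.1 = 0 := hsep y hy (x.1, 0) hf
    rw [h1, h2, add_zero]
end

section
/- For any linear subspace K of a finite-dimensional real vector space F, the subspace K × K^⊥ ⊆ F × F* is a separable Dirac structure: it equals its orthogonal complement with respect to the indefinite form ⟪(f_a,e_a),(f_b,e_b)⟫ = e_a(f_b) + e_b(f_a), and e_a(f_b) = 0 for all (f_a,e_a),(f_b,e_b) ∈ K × K^⊥. -/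
/-- For any subspace `K` of a finite-dimensional real vector space `F`, the subspace
`K × K^⊥ ⊆ F × F*` is a separable Dirac structure: it equals its orthogonal complement
with respect to the form `⟪(f_a,e_a),(f_b,e_b)⟫ = e_a(f_b) + e_b(f_a)`, and
`e_a(f_b) = 0` for all of its pairs of elements. -/
theorem prod_annihilator_is_separable_dirac
    (F : Type*) [AddCommGroup F] [Module ℝ F] [FiniteDimensional ℝ F]
    (K : Submodule ℝ F) :
    (∀ x : F × Module.Dual ℝ F, x ∈ K.prod K.dualAnnihilator ↔
        ∀ y ∈ K.prod K.dualAnnihilator, x.2 y.1 + y.2 x.1 = 0) ∧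
      (∀ x ∈ K.prod K.dualAnnihilator, ∀ y ∈ K.prod K.dualAnnihilator, x.2 y.1 = 0) := by
  have isotropic : ∀ x ∈ K.prod K.dualAnnihilator, ∀ y ∈ K.prod K.dualAnnihilator,
      x.2 y.1 = 0 :=
    fun x hx y hy => (Submodule.mem_dualAnnihilator x.2).1 hx.2 y.1 hy.1
  refine ⟨fun x => ⟨fun hx y hy => ?_, fun h => ⟨?_, ?_⟩⟩, isotropic⟩
  · rw [isotropic x hx y hy, isotropic y hy x hx, add_zero]
  · -- Pairing with `(0, e)` for `e ∈ K^⊥` puts `x.1` in the double annihilator, which is `K`.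
    refine (Subspace.forall_mem_dualAnnihilator_apply_eq_zero_iff K x.1).1 fun e he => ?_
    simpa using h (0, e) ⟨K.zero_mem, he⟩
  · -- Pairing with `(f, 0)` for `f ∈ K` shows that `x.2` annihilates `K`.
    refine (Submodule.mem_dualAnnihilator x.2).2 fun f hf => ?_
    simpa using h (f, 0) ⟨hf, K.dualAnnihilator.zero_mem⟩
end

section
/- Let A : V → W be a linear map between finite-dimensional real vector spaces, and let A* : W* → V* be its dual map. Then the subspace D := {(v, w, v*, w*) ∈ (V × W) × (V* × W*) : A v = w and v* = −A*(w*)}, regarded as a subspace of (V × W) × (V × W)* under the canonical identification (V × W)* ≅ V* × W*, is a separable Dirac structure. -/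
/-!
A covector of the form `(-A* w*, w*)` sends `(v, w)` to `w* (w - A v)`, so it vanishes on the graph
of `A`; this is separability, and it makes `D` isotropic. Conversely, let `x` be orthogonal to `D`.
Pairing `x` with the elements `((v, A v), 0)` shows that its covector part annihilates the graph of
`A`, hence has the required form. Pairing it with the elements `(0, (-A* w*, w*))` shows that every
`w*` vanishes on `w - A v`, and functionals separate points.
-/

/-- For a linear map `A : V → W` between finite-dimensional real vector spaces, the subspace
`D = {(v,w,v*,w*) : A v = w, v* = −A*(w*)}` of `(V × W) × (V × W)*` (under the canonical
identification `(V × W)* ≅ V* × W*`) is a separable Dirac structure. -/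
theorem graph_of_linear_map_is_separable_dirac
    (V W : Type*) [AddCommGroup V] [Module ℝ V] [AddCommGroup W] [Module ℝ W]
    [FiniteDimensional ℝ V] [FiniteDimensional ℝ W]
    (A : V →ₗ[ℝ] W)
    (D : Set ((V × W) × Module.Dual ℝ (V × W)))
    (hD : D = {x | A x.1.1 = x.1.2 ∧ ∃ ws : Module.Dual ℝ W,
      x.2 = Module.dualProdDualEquivDual ℝ V W (-(A.dualMap ws), ws)}) :
    (∀ x, x ∈ D ↔ ∀ y ∈ D, x.2 y.1 + y.2 x.1 = 0) ∧
      (∀ x ∈ D, ∀ y ∈ D, x.2 y.1 = 0) := by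
  subst hD
  have key (ws : Module.Dual ℝ W) (p : V × W) :
      Module.dualProdDualEquivDual ℝ V W (-(A.dualMap ws), ws) p = ws p.2 - ws (A p.1) := by
    simp [Module.dualProdDualEquivDual, sub_eq_add_neg, add_comm]
  have sep : ∀ x ∈ {x : (V × W) × Module.Dual ℝ (V × W) | A x.1.1 = x.1.2 ∧
      ∃ ws : Module.Dual ℝ W, x.2 = Module.dualProdDualEquivDual ℝ V W (-(A.dualMap ws), ws)},
      ∀ y ∈ {x : (V × W) × Module.Dual ℝ (V × W) | A x.1.1 = x.1.2 ∧
      ∃ ws : Module.Dual ℝ W, x.2 = Module.dualProdDualEquivDual ℝ V W (-(A.dualMap ws), ws)},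
      x.2 y.1 = 0 := by
    rintro x ⟨-, ws, hws⟩ y ⟨hy, -⟩
    rw [hws, key, hy, sub_self]
  refine ⟨fun x => ⟨fun hx y hy => by rw [sep x hx y hy, sep y hy x hx, add_zero], fun h => ?_⟩, sep⟩
  refine ⟨?_, x.2 ∘ₗ LinearMap.inr ℝ V W, ?_⟩
  · have hw (ws : Module.Dual ℝ W) : ws (x.1.2 - A x.1.1) = 0 := by
      have := h (0, Module.dualProdDualEquivDual ℝ V W (-(A.dualMap ws), ws)) ⟨by simp, ws, rfl⟩
      rw [key, map_zero, zero_add] at this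
      rw [map_sub, this]
    exact (sub_eq_zero.mp ((Module.forall_dual_apply_eq_zero_iff ℝ _).mp hw)).symm
  · have hv (v : V) : x.2 (v, A v) = 0 := by
      simpa using h ((v, A v), 0) ⟨rfl, 0, LinearMap.ext fun p => by rw [key]; simp⟩
    refine LinearMap.ext fun p => ?_
    rw [key]
    have hp : p = (p.1, A p.1) + ((0, p.2) - (0, A p.1)) := by ext <;> simp
    conv_lhs => rw [hp]
    rw [map_add, hv, zero_add, map_sub]
    rfl
end

section
/- Let B_i be a real N_i × M matrix and B_b a real N_b × M matrix. The subspace D_K := {(f₁, f_b, e¹, e^b) ∈ (ℝ^M × ℝ^{N_b}) × (ℝ^M × ℝ^{N_b}) : B_i f₁ = 0, B_b f₁ = f_b, and there exists e⁰ᵢ ∈ ℝ^{N_i} with e¹ = −B_iᵀ e⁰ᵢ − B_bᵀ e^b} (the Kirchhoff–Dirac structure) is a separable Dirac structure on ℝ^M × ℝ^{N_b}. -/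
open Matrix

/-!
The second half (separability) is the adjointness `(Aᵀ w) ⬝ v = w ⬝ (A v)`: for `x, y ∈ DK` the power
pairing is `-e⁰ᵢ ⬝ (Bi f₁) - e^b ⬝ (Bb f₁) + e^b ⬝ f_b = 0`, Tellegen's theorem. It implies that `DK`
is contained in its orthogonal complement.

Conversely, let `x = (f₁, f_b, e¹, e^b)` be orthogonal to `DK`. Pairing with the elements
`(0, 0, Biᵀ w, 0)` and `(0, 0, -Bbᵀ u, u)` forces `Bi f₁ = 0` and `Bb f₁ = f_b`. Pairing with
`(f, Bb f, 0, 0)` for `Bi f = 0` shows that `e¹ + Bbᵀ e^b` annihilates `ker Bi`, so it lies in the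
range of `Biᵀ` (`exists_eq_transpose_mulVec`), which is the remaining condition.
-/

theorem transpose_mulVec_dotProduct {m n : Type*} [Fintype m] [Fintype n]
    (A : Matrix m n ℝ) (w : m → ℝ) (v : n → ℝ) : (Aᵀ *ᵥ w) ⬝ᵥ v = w ⬝ᵥ (A *ᵥ v) := by
  rw [mulVec_transpose, dotProduct_mulVec]

/-- The inclusion `(ker A)ᗮ ⊆ range Aᵀ`, read off from the fact that the range of the dual of a
linear map between vector spaces is the annihilator of its kernel. -/
theorem exists_eq_transpose_mulVec {m n : Type*} [Fintype m] [Fintype n]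
    (A : Matrix m n ℝ) (v : n → ℝ) (h : ∀ f, A *ᵥ f = 0 → v ⬝ᵥ f = 0) :
    ∃ w, v = Aᵀ *ᵥ w := by
  classical
  have hv : dotProductEquiv ℝ n v ∈ (LinearMap.ker A.mulVecLin).dualAnnihilator := by
    rw [Submodule.mem_dualAnnihilator]
    intro f hf
    exact h f hf
  rw [← LinearMap.range_dualMap_eq_dualAnnihilator_ker] at hv
  obtain ⟨ψ, hψ⟩ := hv
  obtain ⟨w, rfl⟩ := (dotProductEquiv ℝ m).surjective ψ
  refine ⟨w, dotProduct_eq _ _ fun f => ?_⟩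
  rw [transpose_mulVec_dotProduct]
  exact (LinearMap.congr_fun hψ f).symm

/-- The Kirchhoff–Dirac structure
`D_K = {(f₁,f_b,e¹,e^b) : B_i f₁ = 0, B_b f₁ = f_b, ∃ e⁰ᵢ, e¹ = −B_iᵀe⁰ᵢ − B_bᵀe^b}`
is a separable Dirac structure on `ℝ^M × ℝ^{N_b}` (dual identified via the dot product). -/
theorem kirchhoff_dirac_structure
    (M Ni Nb : ℕ) (Bi : Matrix (Fin Ni) (Fin M) ℝ) (Bb : Matrix (Fin Nb) (Fin M) ℝ)
    (DK : Set (((Fin M → ℝ) × (Fin Nb → ℝ)) × ((Fin M → ℝ) × (Fin Nb → ℝ))))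
    (hDK : DK = {x | Bi *ᵥ x.1.1 = 0 ∧ Bb *ᵥ x.1.1 = x.1.2 ∧
      ∃ e0i : Fin Ni → ℝ, x.2.1 = -(Biᵀ *ᵥ e0i) - Bbᵀ *ᵥ x.2.2}) :
    (∀ x, x ∈ DK ↔ ∀ y ∈ DK,
        (x.2.1 ⬝ᵥ y.1.1 + x.2.2 ⬝ᵥ y.1.2) + (y.2.1 ⬝ᵥ x.1.1 + y.2.2 ⬝ᵥ x.1.2) = 0) ∧
      (∀ x ∈ DK, ∀ y ∈ DK, x.2.1 ⬝ᵥ y.1.1 + x.2.2 ⬝ᵥ y.1.2 = 0) := by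
  subst hDK
  have sep : ∀ x ∈ {x : ((Fin M → ℝ) × (Fin Nb → ℝ)) × ((Fin M → ℝ) × (Fin Nb → ℝ)) |
      Bi *ᵥ x.1.1 = 0 ∧ Bb *ᵥ x.1.1 = x.1.2 ∧
      ∃ e0i : Fin Ni → ℝ, x.2.1 = -(Biᵀ *ᵥ e0i) - Bbᵀ *ᵥ x.2.2},
      ∀ y ∈ {x : ((Fin M → ℝ) × (Fin Nb → ℝ)) × ((Fin M → ℝ) × (Fin Nb → ℝ)) |
      Bi *ᵥ x.1.1 = 0 ∧ Bb *ᵥ x.1.1 = x.1.2 ∧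
      ∃ e0i : Fin Ni → ℝ, x.2.1 = -(Biᵀ *ᵥ e0i) - Bbᵀ *ᵥ x.2.2},
      x.2.1 ⬝ᵥ y.1.1 + x.2.2 ⬝ᵥ y.1.2 = 0 := by
    rintro x ⟨-, -, e, he⟩ y ⟨hi, hb, -⟩
    rw [he, sub_dotProduct, neg_dotProduct, transpose_mulVec_dotProduct,
      transpose_mulVec_dotProduct, hi, hb, dotProduct_zero]
    ring
  refine ⟨fun x => ⟨fun hx y hy => by rw [sep x hx y hy, sep y hy x hx, add_zero], fun h => ?_⟩, sep⟩
  obtain ⟨⟨f, fb⟩, e, eb⟩ := x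
  refine ⟨?_, ?_, ?_⟩
  · refine dotProduct_eq_zero _ fun w => ?_
    have := h ((0, 0), (Biᵀ *ᵥ w, 0)) ⟨by simp, by simp, -w, by simp [mulVec_neg]⟩
    rw [dotProduct_comm, ← transpose_mulVec_dotProduct]
    simpa [dotProduct_comm] using this
  · refine dotProduct_eq _ _ fun u => ?_
    have := h ((0, 0), (-(Bbᵀ *ᵥ u), u)) ⟨by simp, by simp, 0, by simp⟩
    simp only [dotProduct_zero, neg_dotProduct, transpose_mulVec_dotProduct] at this
    rw [dotProduct_comm _ u, dotProduct_comm _ u]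
    linarith
  · obtain ⟨w, hw⟩ := exists_eq_transpose_mulVec Bi (e + Bbᵀ *ᵥ eb) fun g hg => by
      have := h ((g, Bb *ᵥ g), (0, 0)) ⟨hg, rfl, 0, by simp⟩
      simpa [add_dotProduct, transpose_mulVec_dotProduct] using this
    refine ⟨-w, ?_⟩
    rw [mulVec_neg, neg_neg, ← hw]
    simp
end

section
/- Let B_s be a real N × M_s matrix, B_d a real N × M_d matrix, R a diagonal M_d × M_d matrix with positive diagonal entries, and H : ℝ^{M_s} × ℝ^N → ℝ continuously differentiable. Assume ker(B_sᵀ) ∩ ker(B_dᵀ) = span{𝟙}. Then a point (q,p) is an equilibrium of the mass-spring-damper dynamics, i.e. B_sᵀ∇_pH(q,p) = 0 and B_s∇_qH(q,p) + B_d R B_dᵀ∇_pH(q,p) = 0, if and only if ∇_qH(q,p) ∈ ker(B_s) and ∇_pH(q,p) ∈ span{𝟙}. -/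
/-! Pairing the momentum balance with the velocity `w = ∇_pH` gives the power balance at
equilibrium. The springs contribute `w ⬝ B_s∇_qH = B_sᵀw ⬝ ∇_qH = 0`, so the dissipated power
`∑ i, rᵢ (B_dᵀw)ᵢ²` vanishes. As every `rᵢ` is positive, `B_dᵀw = 0`; hence `w` lies in
`ker B_sᵀ ⊓ ker B_dᵀ = span {𝟙}`, and the balance reduces to `B_s∇_qH = 0`. -/

open Matrix

/-- The power dissipated by the dampers at velocity `w` is a weighted sum of squares. -/
lemma dotProduct_damping {N Md : ℕ} (Bd : Matrix (Fin N) (Fin Md) ℝ) (r : Fin Md → ℝ)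
    (w : Fin N → ℝ) :
    w ⬝ᵥ ((Bd * diagonal r * Bdᵀ) *ᵥ w) = ∑ i, r i * (Bdᵀ *ᵥ w) i ^ 2 := by
  rw [← mulVec_mulVec, ← mulVec_mulVec, dotProduct_mulVec, ← mulVec_transpose]
  simp only [dotProduct, mulVec_diagonal]
  exact Finset.sum_congr rfl fun i _ => by ring

/-- Equilibria of a mass-spring-damper system on a connected graph:
`(q,p)` is an equilibrium of `q̇ = B_sᵀ∇_pH, ṗ = −B_s∇_qH − B_dRB_dᵀ∇_pH` if and only if
`∇_qH(q,p) ∈ ker B_s` and `∇_pH(q,p) ∈ span{𝟙}`. -/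
theorem equilibria_mass_spring_damper
    (N Ms Md : ℕ)
    (Bs : Matrix (Fin N) (Fin Ms) ℝ) (Bd : Matrix (Fin N) (Fin Md) ℝ)
    (r : Fin Md → ℝ) (hr : ∀ i, 0 < r i)
    (H : (Fin Ms → ℝ) × (Fin N → ℝ) → ℝ)
    (gq : (Fin Ms → ℝ) × (Fin N → ℝ) → Fin Ms → ℝ)
    (gp : (Fin Ms → ℝ) × (Fin N → ℝ) → Fin N → ℝ)
    (hH : ContDiff ℝ 1 H)
    (hgrad : ∀ x v, fderiv ℝ H x v = gq x ⬝ᵥ v.1 + gp x ⬝ᵥ v.2)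
    (hconn : LinearMap.ker (Bsᵀ).mulVecLin ⊓ LinearMap.ker (Bdᵀ).mulVecLin =
      Submodule.span ℝ {(fun _ => 1 : Fin N → ℝ)}) :
    ∀ q p,
      (Bsᵀ *ᵥ gp (q, p) = 0 ∧
          Bs *ᵥ gq (q, p) + (Bd * diagonal r * Bdᵀ) *ᵥ gp (q, p) = 0) ↔
        (gq (q, p) ∈ LinearMap.ker Bs.mulVecLin ∧
          gp (q, p) ∈ Submodule.span ℝ {(fun _ => 1 : Fin N → ℝ)}) := by
  intro q p
  rw [← hconn]
  simp only [Submodule.mem_inf, LinearMap.mem_ker, mulVecLin_apply]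
  constructor
  · rintro ⟨hs, hbal⟩
    have hspring : gp (q, p) ⬝ᵥ (Bs *ᵥ gq (q, p)) = 0 := by
      rw [dotProduct_mulVec, ← mulVec_transpose, hs, zero_dotProduct]
    have hpow : ∑ i, r i * (Bdᵀ *ᵥ gp (q, p)) i ^ 2 = 0 := by
      have h := congrArg (fun v => gp (q, p) ⬝ᵥ v) hbal
      simpa only [dotProduct_add, hspring, dotProduct_damping, zero_add, dotProduct_zero] using h
    have hd : Bdᵀ *ᵥ gp (q, p) = 0 := by
      funext i
      have hi := (Finset.sum_eq_zero_iff_of_nonneg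
        fun i _ => mul_nonneg (hr i).le (sq_nonneg _)).1 hpow i (Finset.mem_univ i)
      simpa [(hr i).ne'] using hi
    rw [← mulVec_mulVec, hd, mulVec_zero, add_zero] at hbal
    exact ⟨hbal, hs, hd⟩
  · rintro ⟨hq, hs, hd⟩
    refine ⟨hs, ?_⟩
    rw [← mulVec_mulVec, hd, mulVec_zero, hq, add_zero]
end

section
/- Let B_s be a real N × M_s matrix, B_d a real N × M_d matrix, R a diagonal M_d × M_d matrix with positive diagonal entries, and assume ker(B_sᵀ) ∩ ker(B_dᵀ) = span{𝟙}. Let C : ℝ^{M_s} × ℝ^N → ℝ be continuously differentiable. Then C is a Casimir function of the mass-spring-damper structure, i.e. at every point (q,p) one has B_sᵀ∇_pC(q,p) = 0 and B_s∇_qC(q,p) + B_d R B_dᵀ∇_pC(q,p) = 0, if and only if at every point (q,p): ∇_pC(q,p) ∈ span{𝟙} and ∇_qC(q,p) ∈ ker(B_s). -/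
/-! Everything happens pointwise. Write `y = gp (q, p)` and `x = gq (q, p)`. Pairing the second
Casimir equation with `y` kills the spring term, because `y ⬝ᵥ Bs x = (Bsᵀ y) ⬝ᵥ x = 0`, and leaves
the dissipation `y ⬝ᵥ (Bd R Bdᵀ) y = ∑ i, r i * (Bdᵀ y) i ^ 2 = 0`. Since `R` is positive,
`Bdᵀ y = 0`, so the equation reduces to `Bs x = 0`, and connectedness identifies the common kernel
with the span of the all-ones vector. The converse is substitution. -/

open Matrix

/-- A passive damper network dissipates no power at `y` only if `y` causes no elongation rate in
any damper. -/
lemma transpose_mulVec_eq_zero_of_dissipation {N Md : ℕ} (Bd : Matrix (Fin N) (Fin Md) ℝ)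
    (r : Fin Md → ℝ) (hr : ∀ i, 0 < r i) (y : Fin N → ℝ)
    (h : y ⬝ᵥ (Bd * diagonal r * Bdᵀ) *ᵥ y = 0) : Bdᵀ *ᵥ y = 0 := by
  have hsum : ∑ i, r i * (Bdᵀ *ᵥ y) i ^ 2 = 0 := by
    rw [← h, ← mulVec_mulVec, ← mulVec_mulVec, dotProduct_mulVec, ← mulVec_transpose]
    simp only [dotProduct, mulVec_diagonal]
    exact Finset.sum_congr rfl fun i _ => by ring
  rw [Finset.sum_eq_zero_iff_of_nonneg fun i _ => mul_nonneg (hr i).le (sq_nonneg _)] at hsum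
  funext i
  simpa [(hr i).ne'] using hsum i (Finset.mem_univ i)

/-- The equivalence at a single point, before connectedness is used. -/
lemma casimir_equations_iff {N Ms Md : ℕ}
    (Bs : Matrix (Fin N) (Fin Ms) ℝ) (Bd : Matrix (Fin N) (Fin Md) ℝ)
    (r : Fin Md → ℝ) (hr : ∀ i, 0 < r i) (x : Fin Ms → ℝ) (y : Fin N → ℝ) :
    (Bsᵀ *ᵥ y = 0 ∧ Bs *ᵥ x + (Bd * diagonal r * Bdᵀ) *ᵥ y = 0) ↔
      (Bsᵀ *ᵥ y = 0 ∧ Bdᵀ *ᵥ y = 0) ∧ Bs *ᵥ x = 0 := by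
  have hdamp (hd : Bdᵀ *ᵥ y = 0) : (Bd * diagonal r * Bdᵀ) *ᵥ y = 0 := by
    rw [← mulVec_mulVec, hd, mulVec_zero]
  constructor
  · rintro ⟨hs, he⟩
    have hd : Bdᵀ *ᵥ y = 0 := by
      apply transpose_mulVec_eq_zero_of_dissipation Bd r hr y
      have hpair := congrArg (y ⬝ᵥ ·) he
      simpa only [dotProduct_add, dotProduct_mulVec y Bs, ← mulVec_transpose Bs, hs,
        zero_dotProduct, zero_add, dotProduct_zero] using hpair
    exact ⟨⟨hs, hd⟩, by rwa [hdamp hd, add_zero] at he⟩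
  · rintro ⟨⟨hs, hd⟩, hx⟩
    exact ⟨hs, by rw [hx, hdamp hd, add_zero]⟩

/-- Casimirs of a mass-spring-damper structure on a connected graph: a continuously
differentiable `C` annihilates the structure matrix `[[0, B_sᵀ],[−B_s, −B_dRB_dᵀ]]` at
every point if and only if at every point `∇_pC ∈ span{𝟙}` and `∇_qC ∈ ker B_s`. -/
theorem casimirs_mass_spring_damper
    (N Ms Md : ℕ)
    (Bs : Matrix (Fin N) (Fin Ms) ℝ) (Bd : Matrix (Fin N) (Fin Md) ℝ)
    (r : Fin Md → ℝ) (hr : ∀ i, 0 < r i)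
    (C : (Fin Ms → ℝ) × (Fin N → ℝ) → ℝ)
    (gq : (Fin Ms → ℝ) × (Fin N → ℝ) → Fin Ms → ℝ)
    (gp : (Fin Ms → ℝ) × (Fin N → ℝ) → Fin N → ℝ)
    (hC : ContDiff ℝ 1 C)
    (hgrad : ∀ x v, fderiv ℝ C x v = gq x ⬝ᵥ v.1 + gp x ⬝ᵥ v.2)
    (hconn : LinearMap.ker (Bsᵀ).mulVecLin ⊓ LinearMap.ker (Bdᵀ).mulVecLin =
      Submodule.span ℝ {(fun _ => 1 : Fin N → ℝ)}) :
    (∀ q p, Bsᵀ *ᵥ gp (q, p) = 0 ∧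
        Bs *ᵥ gq (q, p) + (Bd * diagonal r * Bdᵀ) *ᵥ gp (q, p) = 0) ↔
      (∀ q p, gp (q, p) ∈ Submodule.span ℝ {(fun _ => 1 : Fin N → ℝ)} ∧
        gq (q, p) ∈ LinearMap.ker Bs.mulVecLin) := by
  refine forall_congr' fun q => forall_congr' fun p => ?_
  rw [casimir_equations_iff Bs Bd r hr, ← hconn]
  simp only [Submodule.mem_inf, LinearMap.mem_ker, mulVecLin_apply]
end

section
/- Let B_s be a real N × M_s matrix, B_d a real N × M_d matrix, R a symmetric M_d × M_d matrix, and H : ℝ^{M_s} × ℝ^N → ℝ continuously differentiable. Assume B_sᵀ𝟙 = 0 and B_dᵀ𝟙 = 0. Let (q,p) : ℝ → ℝ^{M_s} × ℝ^N be differentiable and satisfy q̇(t) = B_sᵀ∇_pH(q(t),p(t)) and ṗ(t) = −B_s∇_qH(q(t),p(t)) − B_d R B_dᵀ∇_pH(q(t),p(t)) for all t. Then for all t: (i) 𝟙 ⋅ p(t) = 𝟙 ⋅ p(0); (ii) k ⋅ q(t) = k ⋅ q(0) for every k ∈ ker(B_s); and (iii) q(t) − q(0) ∈ range(B_sᵀ).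 -/
open Matrix

/-!
A linear functional that vanishes on the velocity of a curve is constant along that curve, because
its derivative along the curve is zero. Since `c ⬝ᵥ (A *ᵥ v) = (Aᵀ *ᵥ c) ⬝ᵥ v`, the functional
`𝟙 ⬝ᵥ ·` vanishes on `ṗ`, and `k ⬝ᵥ ·` vanishes on `q̇` for `k ∈ ker B_s`. The velocity `q̇` lies in
`range B_sᵀ`; a displacement `q t - q 0` outside this subspace would be detected by a functional
that vanishes on the subspace, which contradicts the constancy of that functional along `q`.
-/

/-- A linear functional that annihilates the velocity of a curve is conserved along it. -/
lemma functional_conserved {n : ℕ} (f : (Fin n → ℝ) →ₗ[ℝ] ℝ) {x x' : ℝ → Fin n → ℝ}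
    (hx : ∀ t, HasDerivAt x (x' t) t) (hf : ∀ t, f (x' t) = 0) (t : ℝ) :
    f (x t) = f (x 0) := by
  have h : ∀ s, HasDerivAt (fun s => f (x s)) 0 s := fun s => by
    have := (LinearMap.toContinuousLinearMap f).hasFDerivAt.comp_hasDerivAt s (hx s)
    rw [← hf s]
    exact this
  exact is_const_of_deriv_eq_zero (fun s => (h s).differentiableAt) (fun s => (h s).deriv) t 0

/-- Conserved quantities of a mass-spring-damper system: along any solution of
`q̇ = B_sᵀ∇_pH, ṗ = −B_s∇_qH − B_dRB_dᵀ∇_pH`, assuming `B_sᵀ𝟙 = 0` and `B_dᵀ𝟙 = 0`,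
the total momentum `𝟙 ⋅ p`, the quantities `k ⋅ q` for `k ∈ ker B_s` are conserved, and
`q(t) − q(0) ∈ range B_sᵀ`. -/
theorem conservation_laws_mass_spring_damper
    (N Ms Md : ℕ)
    (Bs : Matrix (Fin N) (Fin Ms) ℝ) (Bd : Matrix (Fin N) (Fin Md) ℝ)
    (R : Matrix (Fin Md) (Fin Md) ℝ) (hR : R.IsSymm)
    (H : (Fin Ms → ℝ) × (Fin N → ℝ) → ℝ)
    (gq : (Fin Ms → ℝ) × (Fin N → ℝ) → Fin Ms → ℝ)
    (gp : (Fin Ms → ℝ) × (Fin N → ℝ) → Fin N → ℝ)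
    (hH : ContDiff ℝ 1 H)
    (hgrad : ∀ x v, fderiv ℝ H x v = gq x ⬝ᵥ v.1 + gp x ⬝ᵥ v.2)
    (h1s : Bsᵀ *ᵥ (fun _ => 1 : Fin N → ℝ) = 0)
    (h1d : Bdᵀ *ᵥ (fun _ => 1 : Fin N → ℝ) = 0)
    (q : ℝ → Fin Ms → ℝ) (p : ℝ → Fin N → ℝ)
    (hq : ∀ t, HasDerivAt q (Bsᵀ *ᵥ gp (q t, p t)) t)
    (hp : ∀ t, HasDerivAt p
      (-(Bs *ᵥ gq (q t, p t)) - (Bd * R * Bdᵀ) *ᵥ gp (q t, p t)) t) :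
    ∀ t : ℝ,
      ((fun _ => 1 : Fin N → ℝ) ⬝ᵥ p t = (fun _ => 1 : Fin N → ℝ) ⬝ᵥ p 0) ∧
      (∀ k : Fin Ms → ℝ, Bs *ᵥ k = 0 → k ⬝ᵥ q t = k ⬝ᵥ q 0) ∧
      q t - q 0 ∈ LinearMap.range (Bsᵀ).mulVecLin := by
  intro t
  refine ⟨?_, fun k hk => ?_, ?_⟩
  · refine functional_conserved (dotProductBilin ℝ ℝ (fun _ => 1)) hp (fun s => ?_) t
    change (fun _ => 1 : Fin N → ℝ) ⬝ᵥ _ = 0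
    rw [mulVec_transpose] at h1s h1d
    rw [Matrix.mul_assoc, ← mulVec_mulVec, dotProduct_sub, dotProduct_neg,
      dotProduct_mulVec, dotProduct_mulVec, h1s, h1d]
    simp
  · refine functional_conserved (dotProductBilin ℝ ℝ k) hq (fun s => ?_) t
    change k ⬝ᵥ _ = 0
    rw [dotProduct_mulVec, vecMul_transpose, hk, zero_dotProduct]
  · by_contra hmem
    obtain ⟨f, hne, hle⟩ := Submodule.exists_le_ker_of_notMem hmem
    refine hne ?_
    rw [map_sub, sub_eq_zero]
    exact functional_conserved f hq (fun s => hle ⟨gp (q s, p s), rfl⟩) t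
end

section
/- Let B_s be a real N × M_s matrix, B_d a real N × M_d matrix, and K (M_s × M_s), G (N × N), R (M_d × M_d) diagonal matrices with positive diagonal entries. Assume ker(B_sᵀ) ∩ ker(B_dᵀ) = span{𝟙}, and let L_s = B_s K B_sᵀ. Then the following are equivalent: (a) every differentiable solution (q,p) : ℝ → ℝ^{M_s} × ℝ^N of q̇ = B_sᵀGp, ṗ = −B_sKq − B_dRB_dᵀGp converges as t → ∞ to the unique point (q_∞,p_∞) satisfying q(0) − q_∞ ∈ range(B_sᵀ), K q_∞ ∈ ker(B_s), G p_∞ ∈ span{𝟙}, 𝟙 ⋅ p_∞ = 𝟙 ⋅ p(0); (b) every linear subspace V ⊆ ℝ^N satisfying (G L_s) V ⊆ V and V ⊆ ker(B_dᵀ) satisfies V ⊆ span{𝟙} (i.e. the largest G L_s-invariant subspace contained in ker(B_dᵀ) equals span{𝟙}). -/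
open Matrix Filter

/-!
Along a solution the energy `H` satisfies `Ḣ = -∑ r_j (B_dᵀ G p)_j²`.

Pervasive damping implies stability by LaSalle's argument. After subtracting the equilibrium, the
trajectory stays in the set where `q ⟂ ker B_s` and `𝟙 ⬝ p = 0`, and `H` decreases to a limit. A
cluster point `z*` of the bounded trajectory starts a solution, defined on all of `ℝ`, along which
`H` is constant (`exists_limit_solution`). Such a solution has `B_dᵀ G p = 0`; differentiating this
identity twice at a time gives `B_dᵀ (G L_s)^j G p = 0` for all `j`, so `G p` lies in a
`G L_s`-invariant subspace of `ker B_dᵀ`, hence in `span{𝟙}`, and then `p = 0` and `q = 0`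
(`IsSol.eq_zero_of_energy_const`). Thus the limit of `H` is `0`.

Conversely, for an invariant `V ≤ ker B_dᵀ` and `v ∈ V`, the flow of `ȧ = u`, `u̇ = -G L_s a` on
`V × V` starting from `(0, v)` produces a solution `q = B_sᵀ a`, `p = G⁻¹ u` that never feels the
dampers (`exists_undamped_solution`). Its energy is conserved, so it equals the energy of the limit
`(0, c G⁻¹ 𝟙)`. Since `c 𝟙` is the projection of `v` onto `span{𝟙}` for the inner product defined
by `G⁻¹`, this equality of norms forces `v = c 𝟙`.
-/

namespace MassSpringDamper

variable {N Ms Md : ℕ}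

/-- `(q, p)` solves the mass-spring-damper equations on all of `ℝ`. -/
def IsSol (Bs : Matrix (Fin N) (Fin Ms) ℝ) (Bd : Matrix (Fin N) (Fin Md) ℝ)
    (k : Fin Ms → ℝ) (g : Fin N → ℝ) (r : Fin Md → ℝ)
    (q : ℝ → Fin Ms → ℝ) (p : ℝ → Fin N → ℝ) : Prop :=
  (∀ t, HasDerivAt q (Bsᵀ *ᵥ (diagonal g *ᵥ p t)) t) ∧
  (∀ t, HasDerivAt p
    (-(Bs *ᵥ (diagonal k *ᵥ q t)) -
      (Bd * diagonal r * Bdᵀ) *ᵥ (diagonal g *ᵥ p t)) t)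

/-- The Hamiltonian `½ q⋅(Kq) + ½ p⋅(Gp)`, written out in coordinates. -/
noncomputable def energy (k : Fin Ms → ℝ) (g : Fin N → ℝ) (q : Fin Ms → ℝ) (p : Fin N → ℝ) : ℝ :=
  ∑ i, k i * q i ^ 2 / 2 + ∑ i, g i * p i ^ 2 / 2

/-- The generator of the dynamics on the phase space. -/
noncomputable def gen (Bs : Matrix (Fin N) (Fin Ms) ℝ) (Bd : Matrix (Fin N) (Fin Md) ℝ)
    (k : Fin Ms → ℝ) (g : Fin N → ℝ) (r : Fin Md → ℝ) :
    ((Fin Ms → ℝ) × (Fin N → ℝ)) →L[ℝ] ((Fin Ms → ℝ) × (Fin N → ℝ)) :=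
  LinearMap.toContinuousLinearMap
    (LinearMap.prod
      (Bsᵀ.mulVecLin ∘ₗ (diagonal g).mulVecLin ∘ₗ LinearMap.snd ℝ _ _)
      (-(Bs.mulVecLin ∘ₗ (diagonal k).mulVecLin ∘ₗ LinearMap.fst ℝ _ _) -
        (Bd * diagonal r * Bdᵀ).mulVecLin ∘ₗ (diagonal g).mulVecLin ∘ₗ LinearMap.snd ℝ _ _))

lemma hasDerivAt_mulVec {m n : ℕ} (M : Matrix (Fin m) (Fin n) ℝ) {f : ℝ → Fin n → ℝ}
    {f' : Fin n → ℝ} {t : ℝ} (hf : HasDerivAt f f' t) :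
    HasDerivAt (fun s => M *ᵥ f s) (M *ᵥ f') t :=
  (LinearMap.toContinuousLinearMap M.mulVecLin).hasFDerivAt.comp_hasDerivAt t hf

lemma hasDerivAt_dot {n : ℕ} (a : Fin n → ℝ) {f : ℝ → Fin n → ℝ}
    {f' : Fin n → ℝ} {t : ℝ} (hf : HasDerivAt f f' t) :
    HasDerivAt (fun s => a ⬝ᵥ f s) (a ⬝ᵥ f') t := by
  simp only [dotProduct]
  exact HasDerivAt.fun_sum fun i _ => ((hasDerivAt_pi.1 hf) i).const_mul (a i)

lemma const_of_hasDerivAt_zero {f : ℝ → ℝ} (hf : ∀ t, HasDerivAt f 0 t) (s t : ℝ) :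
    f s = f t :=
  is_const_of_deriv_eq_zero (fun x => (hf x).differentiableAt) (fun x => (hf x).deriv) s t

/-- An exponential of a bounded operator solves the linear equation with any initial value. -/
lemma exists_linear_solution {E : Type*} [NormedAddCommGroup E] [NormedSpace ℝ E]
    [CompleteSpace E] (A : E →L[ℝ] E) (x : E) :
    ∃ w : ℝ → E, w 0 = x ∧ ∀ t, HasDerivAt w (A (w t)) t := by
  refine ⟨fun t => NormedSpace.exp (t • A) x, by simp, fun t => ?_⟩
  have h := hasDerivAt_exp_smul_const' (𝕂 := ℝ) A t
  simpa using h.clm_apply (hasDerivAt_const t x)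

/-- LaSalle's limit solution: a solution of a linear equation that is bounded for positive times has
a cluster point `x`, and there is a solution `w` through `x` such that every `w t` is the limit of
`z (τ n + t)` along a common sequence of times `τ n → ∞`. -/
lemma exists_limit_solution {E : Type*} [NormedAddCommGroup E] [NormedSpace ℝ E]
    [FiniteDimensional ℝ E] (A : E →L[ℝ] E) (z : ℝ → E)
    (hz : ∀ t, HasDerivAt z (A (z t)) t) (C : ℝ) (hC : ∀ t, 0 ≤ t → ‖z t‖ ≤ C) :
    ∃ (w : ℝ → E) (τ : ℕ → ℝ), Tendsto τ atTop atTop ∧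
      (∀ t, HasDerivAt w (A (w t)) t) ∧
      ∀ t, Tendsto (fun n => z (τ n + t)) atTop (nhds (w t)) := by
  have : CompleteSpace E := FiniteDimensional.complete ℝ E
  have : ProperSpace E := FiniteDimensional.proper ℝ E
  obtain ⟨x, -, φ, hφ, hx⟩ := (isCompact_closedBall (0 : E) C).tendsto_subseq
    (x := fun n : ℕ => z n) (fun n => by simpa using hC n (Nat.cast_nonneg n))
  refine ⟨fun t => NormedSpace.exp (t • A) x, fun n => (φ n : ℝ),
    tendsto_natCast_atTop_atTop.comp hφ.tendsto_atTop, fun t => ?_, fun t => ?_⟩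
  · have h := hasDerivAt_exp_smul_const' (𝕂 := ℝ) A t
    simpa using h.clm_apply (hasDerivAt_const t x)
  · -- by uniqueness, `z (s + t) = exp (t A) (z s)`, which is continuous in `z s`
    have key : ∀ s t, z (s + t) = NormedSpace.exp (t • A) (z s) := by
      intro s t
      have hl : ∀ _ : ℝ, LipschitzOnWith ‖A‖₊ (fun y => A y) Set.univ :=
        fun _ => A.lipschitz.lipschitzOnWith
      have := ODE_solution_unique_univ (t₀ := 0) (v := fun _ y => A y) (s := fun _ => Set.univ)
        (K := ‖A‖₊) (f := fun t => z (s + t)) (g := fun t => NormedSpace.exp (t • A) (z s))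
        hl (fun t => ⟨(hz (s + t)).comp_const_add s t, trivial⟩)
        (fun t => ⟨by
          have h := hasDerivAt_exp_smul_const' (𝕂 := ℝ) A t
          simpa using h.clm_apply (hasDerivAt_const t (z s)), trivial⟩) (by simp)
      exact congrFun this t
    simp only [key]
    exact ((NormedSpace.exp (t • A)).continuous.tendsto x).comp hx

variable {Bs : Matrix (Fin N) (Fin Ms) ℝ} {Bd : Matrix (Fin N) (Fin Md) ℝ}
  {k : Fin Ms → ℝ} {g : Fin N → ℝ} {r : Fin Md → ℝ}
  {q : ℝ → Fin Ms → ℝ} {p : ℝ → Fin N → ℝ}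

lemma isSol_iff : IsSol Bs Bd k g r q p ↔
    ∀ t, HasDerivAt (fun t => (q t, p t)) (gen Bs Bd k g r (q t, p t)) t := by
  constructor
  · intro h t
    exact (h.1 t).prodMk (h.2 t)
  · intro h
    exact ⟨fun t => (ContinuousLinearMap.fst ℝ (Fin Ms → ℝ) (Fin N → ℝ)).hasFDerivAt.comp_hasDerivAt t (h t),
      fun t => (ContinuousLinearMap.snd ℝ (Fin Ms → ℝ) (Fin N → ℝ)).hasFDerivAt.comp_hasDerivAt t (h t)⟩

lemma dot_mulVec_transpose {m n : ℕ} (M : Matrix (Fin m) (Fin n) ℝ) (x : Fin n → ℝ)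
    (y : Fin m → ℝ) : x ⬝ᵥ (Mᵀ *ᵥ y) = (M *ᵥ x) ⬝ᵥ y := by
  rw [Matrix.mulVec_transpose, dotProduct_comm, ← Matrix.dotProduct_mulVec, dotProduct_comm]

lemma dot_mulVec_transpose' {m n : ℕ} (M : Matrix (Fin m) (Fin n) ℝ) (x : Fin m → ℝ)
    (y : Fin n → ℝ) : x ⬝ᵥ (M *ᵥ y) = (Mᵀ *ᵥ x) ⬝ᵥ y := by
  have := dot_mulVec_transpose Mᵀ x y
  simpa using this

/-- Energy balance: springs and masses exchange energy, only the dampers dissipate it. -/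
lemma IsSol.hasDerivAt_energy (h : IsSol Bs Bd k g r q p) (t : ℝ) :
    HasDerivAt (fun t => energy k g (q t) (p t))
      (-∑ j, r j * (Bdᵀ *ᵥ (diagonal g *ᵥ p t)) j ^ 2) t := by
  have hq := hasDerivAt_pi.1 (h.1 t)
  have hp := hasDerivAt_pi.1 (h.2 t)
  have h1 : HasDerivAt (fun t => energy k g (q t) (p t))
      ((diagonal k *ᵥ q t) ⬝ᵥ (Bsᵀ *ᵥ (diagonal g *ᵥ p t)) +
       (diagonal g *ᵥ p t) ⬝ᵥ (-(Bs *ᵥ (diagonal k *ᵥ q t)) -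
        (Bd * diagonal r * Bdᵀ) *ᵥ (diagonal g *ᵥ p t))) t := by
    unfold energy
    simp only [dotProduct]
    refine HasDerivAt.add (HasDerivAt.fun_sum fun i _ => ?_) (HasDerivAt.fun_sum fun i _ => ?_)
    · refine ((((hq i).pow 2).const_mul (k i)).div_const 2).congr_deriv ?_
      simp only [mulVec_diagonal]; push_cast; ring
    · refine ((((hp i).pow 2).const_mul (g i)).div_const 2).congr_deriv ?_
      simp only [mulVec_diagonal]; push_cast; ring
  refine h1.congr_deriv ?_
  rw [dot_mulVec_transpose, dotProduct_sub, dotProduct_neg,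
    dotProduct_comm (diagonal g *ᵥ p t) (Bs *ᵥ _), ← mulVec_mulVec, ← mulVec_mulVec,
    dot_mulVec_transpose' Bd]
  simp only [dotProduct, mulVec_diagonal]
  rw [add_sub_assoc', add_neg_cancel, zero_sub]
  congr 1
  exact Finset.sum_congr rfl fun i _ => by ring

lemma energy_nonneg (hk : ∀ i, 0 < k i) (hg : ∀ i, 0 < g i) (x : Fin Ms → ℝ) (y : Fin N → ℝ) :
    0 ≤ energy k g x y := by
  unfold energy
  have h1 := fun i => (hk i).le
  have h2 := fun i => (hg i).le
  exact add_nonneg (Finset.sum_nonneg fun i _ => by have := h1 i; positivity)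
    (Finset.sum_nonneg fun i _ => by have := h2 i; positivity)

/-- The energy is coercive with respect to the (sup) norm of the phase space. -/
lemma exists_norm_le_energy (hk : ∀ i, 0 < k i) (hg : ∀ i, 0 < g i) :
    ∃ C : ℝ, ∀ (x : Fin Ms → ℝ) (y : Fin N → ℝ), ‖(x, y)‖ ≤ √(C * energy k g x y) := by
  refine ⟨∑ i, 2 / k i + ∑ i, 2 / g i, fun x y => ?_⟩
  have hH := energy_nonneg hk hg x y
  have hk2 : ∀ i, 0 ≤ 2 / k i := fun i => (div_pos two_pos (hk i)).le
  have hg2 : ∀ i, 0 ≤ 2 / g i := fun i => (div_pos two_pos (hg i)).le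
  have hks : 0 ≤ ∑ i, 2 / k i := Finset.sum_nonneg fun i _ => hk2 i
  have hgs : 0 ≤ ∑ i, 2 / g i := Finset.sum_nonneg fun i _ => hg2 i
  have hx0 : ∀ i, 0 ≤ k i * x i ^ 2 / 2 := fun i => by have := (hk i).le; positivity
  have hy0 : ∀ i, 0 ≤ g i * y i ^ 2 / 2 := fun i => by have := (hg i).le; positivity
  have hxs := Finset.sum_nonneg fun i (_ : i ∈ Finset.univ) => hx0 i
  have hys := Finset.sum_nonneg fun i (_ : i ∈ Finset.univ) => hy0 i
  refine max_le ?_ ?_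
  · refine (pi_norm_le_iff_of_nonneg (Real.sqrt_nonneg _)).2 fun i => Real.abs_le_sqrt ?_
    have e1 : k i * x i ^ 2 / 2 ≤ energy k g x y := by
      have := Finset.single_le_sum (fun i _ => hx0 i) (Finset.mem_univ i)
      unfold energy; linarith
    have e2 := Finset.single_le_sum (fun i _ => hk2 i) (Finset.mem_univ i)
    calc x i ^ 2 = 2 / k i * (k i * x i ^ 2 / 2) := by have := (hk i).ne'; field_simp
      _ ≤ 2 / k i * energy k g x y := mul_le_mul_of_nonneg_left e1 (hk2 i)
      _ ≤ _ := mul_le_mul_of_nonneg_right (by linarith) hH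
  · refine (pi_norm_le_iff_of_nonneg (Real.sqrt_nonneg _)).2 fun i => Real.abs_le_sqrt ?_
    have e1 : g i * y i ^ 2 / 2 ≤ energy k g x y := by
      have := Finset.single_le_sum (fun i _ => hy0 i) (Finset.mem_univ i)
      unfold energy; linarith
    have e2 := Finset.single_le_sum (fun i _ => hg2 i) (Finset.mem_univ i)
    calc y i ^ 2 = 2 / g i * (g i * y i ^ 2 / 2) := by have := (hg i).ne'; field_simp
      _ ≤ 2 / g i * energy k g x y := mul_le_mul_of_nonneg_left e1 (hg2 i)
      _ ≤ _ := mul_le_mul_of_nonneg_right (by linarith) hH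

lemma continuous_energy :
    Continuous fun z : (Fin Ms → ℝ) × (Fin N → ℝ) => energy k g z.1 z.2 := by
  unfold energy; fun_prop

lemma eq_zero_of_weighted_dot {n : ℕ} {c x : Fin n → ℝ} (hc : ∀ i, 0 < c i)
    (h : (diagonal c *ᵥ x) ⬝ᵥ x = 0) : x = 0 := by
  simp only [dotProduct, mulVec_diagonal] at h
  have h0 : ∀ i ∈ Finset.univ, 0 ≤ c i * x i * x i := fun i _ => by
    have := mul_nonneg (hc i).le (mul_self_nonneg (x i)); linarith
  funext i
  have := (Finset.sum_eq_zero_iff_of_nonneg h0).1 h i (Finset.mem_univ i)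
  simpa [(hc i).ne'] using this

/-- If pervasive damping holds, the only solution of constant energy with `q ⟂ ker B_s` and
`𝟙 ⬝ p = 0` is the trivial one. -/
lemma IsSol.eq_zero_of_energy_const (h : IsSol Bs Bd k g r q p)
    (hk : ∀ i, 0 < k i) (hg : ∀ i, 0 < g i) (hr : ∀ i, 0 < r i)
    (hV : ∀ V : Submodule ℝ (Fin N → ℝ),
        (∀ v ∈ V, (diagonal g * (Bs * diagonal k * Bsᵀ)) *ᵥ v ∈ V) →
        V ≤ LinearMap.ker (Bdᵀ).mulVecLin →
        V ≤ Submodule.span ℝ {(fun _ => 1 : Fin N → ℝ)})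
    (L : ℝ) (hL : ∀ t, energy k g (q t) (p t) = L)
    (hq : ∀ t n, Bs *ᵥ n = 0 → n ⬝ᵥ q t = 0)
    (hp : ∀ t, (fun _ => 1 : Fin N → ℝ) ⬝ᵥ p t = 0) : q 0 = 0 ∧ p 0 = 0 := by
  have hd : ∀ t, Bdᵀ *ᵥ (diagonal g *ᵥ p t) = 0 := by
    intro t
    have h1 := h.hasDerivAt_energy t
    simp only [hL] at h1
    have h2 := h1.unique (hasDerivAt_const t L)
    have h0 : ∀ j ∈ Finset.univ, 0 ≤ r j * (Bdᵀ *ᵥ (diagonal g *ᵥ p t)) j ^ 2 :=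
      fun j _ => mul_nonneg (hr j).le (sq_nonneg _)
    funext j
    have := (Finset.sum_eq_zero_iff_of_nonneg h0).1 (neg_eq_zero.1 h2) j (Finset.mem_univ j)
    simpa [(hr j).ne'] using this
  have hp' : ∀ t, HasDerivAt p (-(Bs *ᵥ (diagonal k *ᵥ q t))) t := by
    intro t
    have := h.2 t
    rwa [← mulVec_mulVec, hd t, mulVec_zero, sub_zero] at this
  -- a linear observation that vanishes identically has vanishing second derivative
  have step : ∀ M : Matrix (Fin Md) (Fin N) ℝ, (∀ t, M *ᵥ p t = 0) →
      ∀ t, (M * (Bs * diagonal k * Bsᵀ) * diagonal g) *ᵥ p t = 0 := by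
    intro M hM t
    have h1 : ∀ t, (M * Bs * diagonal k) *ᵥ q t = 0 := by
      intro t
      have e := hasDerivAt_mulVec M (hp' t)
      simp only [hM] at e
      have := e.unique (hasDerivAt_const t 0)
      rw [mulVec_neg, neg_eq_zero] at this
      simpa [mulVec_mulVec, Matrix.mul_assoc] using this
    have e := hasDerivAt_mulVec (M * Bs * diagonal k) (h.1 t)
    simp only [h1] at e
    have := e.unique (hasDerivAt_const t 0)
    simpa only [mulVec_mulVec, Matrix.mul_assoc] using this
  have hobs : ∀ j : ℕ, ∀ t,
      (Bdᵀ * (diagonal g * (Bs * diagonal k * Bsᵀ)) ^ j * diagonal g) *ᵥ p t = 0 := by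
    intro j
    induction j with
    | zero => intro t; simpa [mulVec_mulVec] using hd t
    | succ j ih =>
      intro t
      have := step _ ih t
      rw [pow_succ]
      simpa only [Matrix.mul_assoc] using this
  let V : Submodule ℝ (Fin N → ℝ) :=
    ⨅ j : ℕ, LinearMap.ker (Bdᵀ * (diagonal g * (Bs * diagonal k * Bsᵀ)) ^ j).mulVecLin
  have hVspan : V ≤ Submodule.span ℝ {(fun _ => 1 : Fin N → ℝ)} := by
    refine hV V (fun v hv => ?_) (fun v hv => ?_)
    · simp only [V, Submodule.mem_iInf, LinearMap.mem_ker, mulVecLin_apply] at hv ⊢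
      intro j
      have := hv (j + 1)
      rw [pow_succ, ← Matrix.mul_assoc, ← mulVec_mulVec] at this
      exact this
    · simp only [V, Submodule.mem_iInf, LinearMap.mem_ker, mulVecLin_apply] at hv ⊢
      simpa using hv 0
  have hp0 : ∀ t, p t = 0 := by
    intro t
    have hm : diagonal g *ᵥ p t ∈ V := by
      simp only [V, Submodule.mem_iInf, LinearMap.mem_ker, mulVecLin_apply]
      intro j
      rw [mulVec_mulVec]
      exact hobs j t
    obtain ⟨a, ha⟩ := Submodule.mem_span_singleton.1 (hVspan hm)
    refine eq_zero_of_weighted_dot hg ?_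
    rw [← ha, smul_dotProduct, hp t, smul_zero]
  refine ⟨eq_zero_of_weighted_dot hk (hq 0 _ ?_), hp0 0⟩
  have e := hp' 0
  have hpz : p = fun _ => 0 := funext hp0
  rw [hpz] at e
  exact neg_eq_zero.1 (e.unique (hasDerivAt_const 0 0))

/-- LaSalle's argument for a trajectory whose equilibrium is the origin. -/
lemma IsSol.tendsto_zero (h : IsSol Bs Bd k g r q p)
    (hk : ∀ i, 0 < k i) (hg : ∀ i, 0 < g i) (hr : ∀ i, 0 < r i)
    (hs1 : Bsᵀ *ᵥ (fun _ => 1 : Fin N → ℝ) = 0) (hd1 : Bdᵀ *ᵥ (fun _ => 1 : Fin N → ℝ) = 0)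
    (hV : ∀ V : Submodule ℝ (Fin N → ℝ),
        (∀ v ∈ V, (diagonal g * (Bs * diagonal k * Bsᵀ)) *ᵥ v ∈ V) →
        V ≤ LinearMap.ker (Bdᵀ).mulVecLin →
        V ≤ Submodule.span ℝ {(fun _ => 1 : Fin N → ℝ)})
    (hq : ∀ n, Bs *ᵥ n = 0 → n ⬝ᵥ q 0 = 0)
    (hp : (fun _ => 1 : Fin N → ℝ) ⬝ᵥ p 0 = 0) :
    Tendsto (fun t => (q t, p t)) atTop (nhds 0) := by
  have hqt : ∀ t n, Bs *ᵥ n = 0 → n ⬝ᵥ q t = 0 := by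
    intro t n hn
    rw [← hq n hn]
    refine const_of_hasDerivAt_zero (f := fun t => n ⬝ᵥ q t) (fun s => ?_) t 0
    refine (hasDerivAt_dot n (h.1 s)).congr_deriv ?_
    rw [dot_mulVec_transpose, hn, zero_dotProduct]
  have hpt : ∀ t, (fun _ => 1 : Fin N → ℝ) ⬝ᵥ p t = 0 := by
    intro t
    rw [← hp]
    refine const_of_hasDerivAt_zero (f := fun t => (fun _ => 1 : Fin N → ℝ) ⬝ᵥ p t)
      (fun s => ?_) t 0
    refine (hasDerivAt_dot _ (h.2 s)).congr_deriv ?_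
    rw [dotProduct_sub, dotProduct_neg, dot_mulVec_transpose', hs1, ← mulVec_mulVec,
      ← mulVec_mulVec, dot_mulVec_transpose' Bd, hd1]
    simp
  have hanti : Antitone fun t => energy k g (q t) (p t) :=
    antitone_of_deriv_nonpos (fun t => (h.hasDerivAt_energy t).differentiableAt) fun t => by
      rw [(h.hasDerivAt_energy t).deriv]
      exact neg_nonpos.2 (Finset.sum_nonneg fun j _ => mul_nonneg (hr j).le (sq_nonneg _))
  obtain ⟨C, hC⟩ := exists_norm_le_energy (k := k) (g := g) hk hg
  have hbdd : BddBelow (Set.range fun t => energy k g (q t) (p t)) :=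
    ⟨0, by rintro _ ⟨t, rfl⟩; exact energy_nonneg hk hg _ _⟩
  obtain ⟨L, hL⟩ : ∃ L, Tendsto (fun t => energy k g (q t) (p t)) atTop (nhds L) :=
    ⟨_, tendsto_atTop_ciInf hanti hbdd⟩
  have hbound : ∀ t, 0 ≤ t → ‖(q t, p t)‖ ≤ √(|C| * energy k g (q 0) (p 0)) := by
    intro t ht
    refine (hC _ _).trans (Real.sqrt_le_sqrt ?_)
    exact mul_le_mul (le_abs_self C) (hanti ht) (energy_nonneg hk hg _ _) (abs_nonneg C)
  obtain ⟨w, τ, hτ, hw, hlim⟩ := exists_limit_solution (gen Bs Bd k g r)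
    (fun t => (q t, p t)) (isSol_iff.1 h) _ hbound
  have hwsol : IsSol Bs Bd k g r (fun t => (w t).1) (fun t => (w t).2) := isSol_iff.2 hw
  have hwE : ∀ t, energy k g (w t).1 (w t).2 = L := fun t =>
    tendsto_nhds_unique ((continuous_energy.tendsto (w t)).comp (hlim t))
      (hL.comp (tendsto_atTop_add_const_right _ t hτ))
  have hwq : ∀ t n, Bs *ᵥ n = 0 → n ⬝ᵥ (w t).1 = 0 := by
    intro t n hn
    have hc : Continuous fun z : (Fin Ms → ℝ) × (Fin N → ℝ) => n ⬝ᵥ z.1 := by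
      simp only [dotProduct]; fun_prop
    refine tendsto_nhds_unique ((hc.tendsto (w t)).comp (hlim t)) ?_
    simp only [Function.comp_def, hqt _ n hn]
    exact tendsto_const_nhds
  have hwp : ∀ t, (fun _ => 1 : Fin N → ℝ) ⬝ᵥ (w t).2 = 0 := by
    intro t
    have hc : Continuous fun z : (Fin Ms → ℝ) × (Fin N → ℝ) =>
        (fun _ => 1 : Fin N → ℝ) ⬝ᵥ z.2 := by
      simp only [dotProduct]; fun_prop
    refine tendsto_nhds_unique ((hc.tendsto (w t)).comp (hlim t)) ?_
    simp only [Function.comp_def, hpt]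
    exact tendsto_const_nhds
  obtain ⟨h1, h2⟩ := hwsol.eq_zero_of_energy_const hk hg hr hV L hwE hwq hwp
  have hL0 : L = 0 := by
    rw [← hwE 0]
    rw [h1, h2]
    simp [energy]
  rw [hL0] at hL
  refine squeeze_zero_norm (fun t => hC (q t) (p t)) ?_
  have := (hL.const_mul C).sqrt
  simpa using this

/-- Oscillations inside an invariant subspace of `ker B_dᵀ` are undamped, and can be started from
any velocity `G p = v` in that subspace with the springs relaxed. -/
lemma exists_undamped_solution (hg : ∀ i, 0 < g i) (V : Submodule ℝ (Fin N → ℝ))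
    (hV : ∀ v ∈ V, (diagonal g * (Bs * diagonal k * Bsᵀ)) *ᵥ v ∈ V)
    (hVd : V ≤ LinearMap.ker (Bdᵀ).mulVecLin) (v : Fin N → ℝ) (hv : v ∈ V) :
    ∃ q p, IsSol Bs Bd k g r q p ∧ q 0 = 0 ∧ diagonal g *ᵥ p 0 = v ∧
      ∀ t, Bdᵀ *ᵥ (diagonal g *ᵥ p t) = 0 := by
  have hginv : ∀ x : Fin N → ℝ, diagonal g *ᵥ (diagonal (fun i => (g i)⁻¹) *ᵥ x) = x := by
    intro x; funext i; simp [mulVec_diagonal, (hg i).ne']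
  have hginv' : ∀ x : Fin N → ℝ, diagonal (fun i => (g i)⁻¹) *ᵥ (diagonal g *ᵥ x) = x := by
    intro x; funext i; simp [mulVec_diagonal, (hg i).ne']
  let T : V →ₗ[ℝ] V :=
    (diagonal g * (Bs * diagonal k * Bsᵀ)).mulVecLin.restrict hV
  let A : (V × V) →L[ℝ] (V × V) := LinearMap.toContinuousLinearMap
    (LinearMap.prod (LinearMap.snd ℝ V V) (-(T ∘ₗ LinearMap.fst ℝ V V)))
  obtain ⟨w, hw0, hw⟩ := exists_linear_solution A ((0 : V), (⟨v, hv⟩ : V))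
  have ha : ∀ t, HasDerivAt (fun t => ((w t).1 : Fin N → ℝ)) ((w t).2 : Fin N → ℝ) t := fun t =>
    (V.subtypeL.comp (ContinuousLinearMap.fst ℝ V V)).hasFDerivAt.comp_hasDerivAt t (hw t)
  have hu : ∀ t, HasDerivAt (fun t => ((w t).2 : Fin N → ℝ))
      (-((diagonal g * (Bs * diagonal k * Bsᵀ)) *ᵥ ((w t).1 : Fin N → ℝ))) t := fun t =>
    (V.subtypeL.comp (ContinuousLinearMap.snd ℝ V V)).hasFDerivAt.comp_hasDerivAt t (hw t)
  have hd : ∀ t, Bdᵀ *ᵥ ((w t).2 : Fin N → ℝ) = 0 := fun t => hVd (w t).2.2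
  refine ⟨fun t => Bsᵀ *ᵥ ((w t).1 : Fin N → ℝ),
    fun t => diagonal (fun i => (g i)⁻¹) *ᵥ ((w t).2 : Fin N → ℝ), ⟨fun t => ?_, fun t => ?_⟩,
    by simp [hw0], by simp only [hginv, hw0], fun t => by rw [hginv]; exact hd t⟩
  · rw [hginv]
    exact hasDerivAt_mulVec _ (ha t)
  · refine (hasDerivAt_mulVec _ (hu t)).congr_deriv ?_
    rw [hginv, ← mulVec_mulVec _ (Bd * diagonal r), hd, mulVec_zero, sub_zero, mulVec_neg,
      ← mulVec_mulVec, hginv']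
    simp only [mulVec_mulVec, Matrix.mul_assoc]

end MassSpringDamper

open MassSpringDamper in
/-- Asymptotic stability of a linear mass-spring-damper system on a connected graph:
every solution of `q̇ = B_sᵀGp, ṗ = −B_sKq − B_dRB_dᵀGp` converges to the unique
equilibrium `(q_∞,p_∞)` determined by its initial condition if and only if the largest
`GL_s`-invariant subspace contained in `ker B_dᵀ` equals `span{𝟙}` (pervasive damping),
where `L_s = B_sKB_sᵀ`. -/
theorem stability_iff_pervasive_damping
    (N Ms Md : ℕ)
    (Bs : Matrix (Fin N) (Fin Ms) ℝ) (Bd : Matrix (Fin N) (Fin Md) ℝ)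
    (k : Fin Ms → ℝ) (g : Fin N → ℝ) (r : Fin Md → ℝ)
    (hk : ∀ i, 0 < k i) (hg : ∀ i, 0 < g i) (hr : ∀ i, 0 < r i)
    (hconn : LinearMap.ker (Bsᵀ).mulVecLin ⊓ LinearMap.ker (Bdᵀ).mulVecLin =
      Submodule.span ℝ {(fun _ => 1 : Fin N → ℝ)}) :
    (∀ (q : ℝ → Fin Ms → ℝ) (p : ℝ → Fin N → ℝ),
        (∀ t, HasDerivAt q (Bsᵀ *ᵥ (diagonal g *ᵥ p t)) t) →
        (∀ t, HasDerivAt p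
          (-(Bs *ᵥ (diagonal k *ᵥ q t)) -
            (Bd * diagonal r * Bdᵀ) *ᵥ (diagonal g *ᵥ p t)) t) →
        ∀ (qinf : Fin Ms → ℝ) (pinf : Fin N → ℝ),
          q 0 - qinf ∈ LinearMap.range (Bsᵀ).mulVecLin →
          diagonal k *ᵥ qinf ∈ LinearMap.ker Bs.mulVecLin →
          diagonal g *ᵥ pinf ∈ Submodule.span ℝ {(fun _ => 1 : Fin N → ℝ)} →
          (fun _ => 1 : Fin N → ℝ) ⬝ᵥ pinf = (fun _ => 1 : Fin N → ℝ) ⬝ᵥ p 0 →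
          Tendsto (fun t => (q t, p t)) atTop (nhds (qinf, pinf))) ↔
      (∀ V : Submodule ℝ (Fin N → ℝ),
        (∀ v ∈ V, (diagonal g * (Bs * diagonal k * Bsᵀ)) *ᵥ v ∈ V) →
        V ≤ LinearMap.ker (Bdᵀ).mulVecLin →
        V ≤ Submodule.span ℝ {(fun _ => 1 : Fin N → ℝ)}) := by
  have hone : (fun _ => 1 : Fin N → ℝ) ∈
      LinearMap.ker (Bsᵀ).mulVecLin ⊓ LinearMap.ker (Bdᵀ).mulVecLin := by
    rw [hconn]; exact Submodule.mem_span_singleton_self _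
  have hs1 : Bsᵀ *ᵥ (fun _ => 1 : Fin N → ℝ) = 0 := hone.1
  have hd1 : Bdᵀ *ᵥ (fun _ => 1 : Fin N → ℝ) = 0 := hone.2
  constructor
  · intro hstab V hV hVd v hv
    obtain ⟨q, p, hsol, hq0, hp0, hund⟩ :=
      exists_undamped_solution (r := r) hg V hV hVd v hv
    rcases isEmpty_or_nonempty (Fin N) with hN | hN
    · rw [Subsingleton.elim v 0]; exact zero_mem _
    have hSpos : 0 < ∑ i, (g i)⁻¹ :=
      Finset.sum_pos (fun i _ => inv_pos.2 (hg i)) Finset.univ_nonempty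
    -- the coefficient for which `c G⁻¹ 𝟙` has the same total momentum as `p 0`
    obtain ⟨c, hc⟩ : ∃ c : ℝ, c * ∑ i, (g i)⁻¹ = ∑ i, p 0 i :=
      ⟨(∑ i, p 0 i) / ∑ i, (g i)⁻¹, div_mul_cancel₀ _ hSpos.ne'⟩
    have hlim := hstab q p hsol.1 hsol.2 0 (fun i => c * (g i)⁻¹)
      (by rw [hq0, sub_zero]; exact zero_mem _) (by simp)
      (by
        refine Submodule.mem_span_singleton.2 ⟨c, ?_⟩
        funext i
        have := (hg i).ne'
        simp [mulVec_diagonal]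
        field_simp)
      (by simp only [dotProduct, one_mul]; rw [← Finset.mul_sum, hc])
    have hE : ∀ t, energy k g (q t) (p t) = energy k g (q 0) (p 0) := fun t =>
      const_of_hasDerivAt_zero (f := fun t => energy k g (q t) (p t))
        (fun s => (hsol.hasDerivAt_energy s).congr_deriv (by simp [hund s])) t 0
    have hElim := (continuous_energy (k := k) (g := g)).tendsto _ |>.comp hlim
    simp only [Function.comp_def, hE] at hElim
    have heq := tendsto_nhds_unique hElim tendsto_const_nhds
    rw [hq0] at heq
    simp only [energy, Pi.zero_apply] at heq
    -- expanding the square, the momentum balance turns the energy identity into `p 0 = c G⁻¹ 𝟙`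
    have hsq : ∑ i, g i * (p 0 i - c * (g i)⁻¹) ^ 2 = 0 := by
      have e : ∀ i, g i * (p 0 i - c * (g i)⁻¹) ^ 2 =
          2 * (g i * p 0 i ^ 2 / 2) - 2 * (g i * (c * (g i)⁻¹) ^ 2 / 2)
            - 2 * c * p 0 i + 2 * c * (c * (g i)⁻¹) := by
        intro i
        have := (hg i).ne'
        field_simp
        ring
      simp only [e, Finset.sum_add_distrib, Finset.sum_sub_distrib, ← Finset.mul_sum]
      rw [hc]
      linarith
    refine Submodule.mem_span_singleton.2 ⟨c, ?_⟩
    funext i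
    have h0 := (Finset.sum_eq_zero_iff_of_nonneg
      (fun i _ => mul_nonneg (hg i).le (sq_nonneg _))).1 hsq i (Finset.mem_univ i)
    have hgi := (hg i).ne'
    have h1 : p 0 i - c * (g i)⁻¹ = 0 := by simpa [hgi] using h0
    rw [← hp0, mulVec_diagonal, sub_eq_zero.1 h1]
    simp
    field_simp
  · intro hV q p hq hp qinf pinf hqi hKq hGp h1p
    have hB : Bs *ᵥ (diagonal k *ᵥ qinf) = 0 := hKq
    obtain ⟨c, hc⟩ := Submodule.mem_span_singleton.1 hGp
    have hsol : IsSol Bs Bd k g r (fun t => q t - qinf) (fun t => p t - pinf) := by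
      refine ⟨fun t => ((hq t).sub_const qinf).congr_deriv ?_,
        fun t => ((hp t).sub_const pinf).congr_deriv ?_⟩
      · rw [mulVec_sub, mulVec_sub, ← hc, mulVec_smul, hs1]; simp
      · rw [mulVec_sub, mulVec_sub, mulVec_sub, mulVec_sub, hB, ← hc, mulVec_smul,
          ← mulVec_mulVec (fun _ => 1), hd1]
        simp
    have := hsol.tendsto_zero hk hg hr hs1 hd1 hV
      (by
        intro n hn
        obtain ⟨x, hx⟩ := hqi
        rw [← hx, mulVecLin_apply, dot_mulVec_transpose, hn, zero_dotProduct])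
      (by rw [dotProduct_sub, h1p, sub_self])
    have h2 := this.add_const (qinf, pinf)
    simpa using h2
end

section
/- Let B_s be a real N × M_s matrix, B_d a real N × M_d matrix, K (M_s × M_s), G (N × N), R (M_d × M_d) diagonal matrices with positive diagonal entries, and assume ker(B_sᵀ) ∩ ker(B_dᵀ) = span{𝟙}. Let E be a real N × n_b matrix and f̄_b ∈ ℝ^{n_b} a constant vector with E f̄_b ∈ range(B_s). Consider the disturbed dynamics q̇ = B_sᵀGp, ṗ = −B_sKq − B_dRB_dᵀGp + E f̄_b. Then: (i) for every (q₀,p₀) there exists a unique (q̄_∞, p_∞) with B_s K q̄_∞ = E f̄_b, G p_∞ ∈ span{𝟙}, q₀ − q̄_∞ ∈ range(B_sᵀ), and 𝟙 ⋅ p_∞ = 𝟙 ⋅ p₀; (ii) every differentiable solution (q,p) converges as t → ∞ to the point (q̄_∞,p_∞) so associated with (q(0),p(0)) if and only if every linear subspace V ⊆ ℝ^N with (G B_s K B_sᵀ) V ⊆ V and V ⊆ ker(B_dᵀ) satisfies V ⊆ span{𝟙}. -/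
/-!
Subtracting the equilibrium turns the disturbed dynamics into the undisturbed linear one,
`ẋ = Bsᵀ G y`, `ẏ = -Bs K x - Bd R Bdᵀ G y`, on the space `range Bsᵀ × 𝟙^⊥`.

The equilibrium exists because the Laplacian `Ls = Bs K Bsᵀ` has the same range as `Bs`
(`range_laplacian`), and is unique because `Bsᵀ z` vanishes when `Ls z` does and a vector `p`
with `G p ∈ span 𝟙` and `𝟙 ⬝ p = 0` vanishes.

Stability (`homogeneous_tendsto`): the energy `(x ⬝ K x + y ⬝ G y) / 2` decreases at the rate
`|Bdᵀ G y|²` weighted by `R`. Hence the trajectory is bounded, the energy converges, and by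
Barbalat's lemma (`tendsto_deriv_zero`) the output `Bdᵀ G y` tends to zero. Applying the same
lemma to functionals of the trajectory, the set of functionals tending to zero is invariant under
the transposed generator (`tendsto_zero_of_observable`). Its common kernel `Z` is invariant,
undamped, and contained in `range Bsᵀ × 𝟙^⊥`; the velocities `G y` with `(x, y) ∈ Z` form a
`G Ls`-invariant subspace of `ker Bdᵀ`, so the hypothesis forces `Z = 0`. By finite-dimensional
duality every functional then tends to zero.

Conversely (`invariant_le_span`), an invariant subspace of `ker Bdᵀ` carries undamped motions,
which conserve energy. If these converge, comparing the energy at the start and in the limit shows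
that the initial velocity is a multiple of `𝟙`.
-/

open Matrix Filter

/-- Barbalat's lemma in differentiable form: if `f` converges and `f''` is bounded for
`t ≥ 0`, then `f'` tends to zero. -/
theorem tendsto_deriv_zero {f f' f'' : ℝ → ℝ} {L M : ℝ}
    (hf : ∀ t, HasDerivAt f (f' t) t) (hf' : ∀ t, HasDerivAt f' (f'' t) t)
    (hM : ∀ t, 0 ≤ t → |f'' t| ≤ M) (hL : Tendsto f atTop (nhds L)) :
    Tendsto f' atTop (nhds 0) := by
  have hM0 : 0 ≤ M := (abs_nonneg _).trans (hM 0 le_rfl)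
  rw [Metric.tendsto_atTop]
  intro ε hε
  -- On a window of this length `f'` varies by less than `ε / 2`.
  set h : ℝ := ε / (2 * (M + 1)) with hh
  have hpos : 0 < h := by positivity
  have hMh : M * h < ε / 2 := by
    rw [hh, mul_div_assoc', div_lt_div_iff₀ (by positivity) (by positivity)]
    nlinarith
  obtain ⟨T, hT⟩ := Metric.tendsto_atTop.1 hL (h * ε / 4) (by positivity)
  refine ⟨max T 0, fun t ht => ?_⟩
  have htT : T ≤ t := (le_max_left _ _).trans ht
  have ht0 : 0 ≤ t := (le_max_right _ _).trans ht
  obtain ⟨c, hc, hcs⟩ := exists_hasDerivAt_eq_slope f f' (a := t) (b := t + h) (by linarith)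
    (fun x _ => (hf x).continuousAt.continuousWithinAt) (fun x _ => hf x)
  have h1 : |f' c| < ε / 2 := by
    have e1 := hT t htT
    have e2 := hT (t + h) (by linarith)
    rw [Real.dist_eq, abs_lt] at e1 e2
    rw [hcs, add_sub_cancel_left, abs_div, abs_of_pos hpos, div_lt_iff₀ hpos, abs_lt]
    constructor <;> linarith
  have h2 : |f' c - f' t| ≤ M * |c - t| := by
    have := (convex_Icc t c).norm_image_sub_le_of_norm_hasDerivWithin_le (f := f') (f' := f'')
      (C := M) (x := t) (y := c) (fun x _ => (hf' x).hasDerivWithinAt)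
      (fun x hx => hM x (ht0.trans hx.1)) ⟨le_rfl, hc.1.le⟩ ⟨hc.1.le, le_rfl⟩
    simpa using this
  have h3 : |c - t| ≤ h := by
    rw [abs_of_pos (by linarith [hc.1])]; linarith [hc.2]
  have h4 : M * |c - t| ≤ M * h := mul_le_mul_of_nonneg_left h3 hM0
  rw [Real.dist_eq, sub_zero]
  rw [abs_le] at h2
  rw [abs_lt] at h1 ⊢
  constructor <;> linarith

theorem hasDerivAt_dual {E : Type*} [NormedAddCommGroup E] [NormedSpace ℝ E]
    [FiniteDimensional ℝ E] (ℓ : Module.Dual ℝ E) {w : ℝ → E} {w' : E} {t : ℝ}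
    (h : HasDerivAt w w' t) : HasDerivAt (fun s => ℓ (w s)) (ℓ w') t :=
  (LinearMap.toContinuousLinearMap ℓ).hasFDerivAt.comp_hasDerivAt t h

/-- For a bounded trajectory `w` of `ẇ = A w`, the functionals `ℓ` with `ℓ (w t) → 0` form an
`A`-invariant subspace of the dual. If its common kernel, an `A`-invariant subspace of `E`, is
forced to be trivial, then every functional tends to zero along `w`. -/
theorem tendsto_zero_of_observable {E : Type*} [NormedAddCommGroup E] [NormedSpace ℝ E]
    [FiniteDimensional ℝ E] (A : E →ₗ[ℝ] E) (w : ℝ → E) (hw : ∀ t, HasDerivAt w (A (w t)) t)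
    (hbd : ∀ ℓ : Module.Dual ℝ E, ∃ C, ∀ t, 0 ≤ t → |ℓ (w t)| ≤ C)
    (hobs : ∀ Z : Submodule ℝ E, (∀ z ∈ Z, A z ∈ Z) →
      (∀ ℓ : Module.Dual ℝ E, Tendsto (fun t => ℓ (w t)) atTop (nhds 0) → ∀ z ∈ Z, ℓ z = 0) →
      Z = ⊥) (ℓ : Module.Dual ℝ E) :
    Tendsto (fun t => ℓ (w t)) atTop (nhds 0) := by
  let S : Submodule ℝ (Module.Dual ℝ E) :=
    { carrier := {ℓ | Tendsto (fun t => ℓ (w t)) atTop (nhds 0)}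
      add_mem' := fun {a b} ha hb => by simpa using Tendsto.add ha hb
      zero_mem' := by simp
      smul_mem' := fun c a ha => by simpa using Tendsto.const_mul c ha }
  have hS : ∀ ℓ ∈ S, ℓ ∘ₗ A ∈ S := fun ℓ hℓ => by
    obtain ⟨C, hC⟩ := hbd (ℓ ∘ₗ A ∘ₗ A)
    exact tendsto_deriv_zero (f'' := fun t => (ℓ ∘ₗ A ∘ₗ A) (w t))
      (fun t => hasDerivAt_dual ℓ (hw t)) (fun t => hasDerivAt_dual (ℓ ∘ₗ A) (hw t)) hC hℓ
  have hZ : S.dualCoannihilator = ⊥ := by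
    refine hobs _ (fun z hz => ?_) (fun ℓ hℓ z hz => ?_)
    · rw [Submodule.mem_dualCoannihilator] at hz ⊢
      exact fun φ hφ => hz _ (hS φ hφ)
    · exact (Submodule.mem_dualCoannihilator z).1 hz ℓ hℓ
  have hST : S = ⊤ := by
    have := Subspace.dualCoannihilator_dualAnnihilator_eq (W := S)
    rw [hZ, Submodule.dualAnnihilator_bot] at this
    exact this.symm
  have : ℓ ∈ S := hST ▸ Submodule.mem_top
  exact this

theorem exists_linear_flow {E : Type*} [NormedAddCommGroup E] [NormedSpace ℝ E]
    [FiniteDimensional ℝ E] (A : E →ₗ[ℝ] E) (u₀ : E) :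
    ∃ u : ℝ → E, u 0 = u₀ ∧ ∀ t, HasDerivAt u (A (u t)) t := by
  have : CompleteSpace E := FiniteDimensional.complete ℝ E
  let A' : E →L[ℝ] E := LinearMap.toContinuousLinearMap A
  refine ⟨fun t => NormedSpace.exp (t • A') u₀, by simp, fun t => ?_⟩
  exact (hasDerivAt_exp_smul_const' (𝕂 := ℝ) A' t).clm_apply (hasDerivAt_const t u₀) |>.congr_deriv
    (by simp [A'])

section Diagonal

variable {n : ℕ} {d : Fin n → ℝ}

theorem quad_eq_sum (x : Fin n → ℝ) : x ⬝ᵥ (diagonal d *ᵥ x) = ∑ i, d i * x i ^ 2 := by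
  simp only [dotProduct, mulVec_diagonal]
  exact Finset.sum_congr rfl fun i _ => by ring

theorem quad_nonneg (hd : ∀ i, 0 < d i) (x : Fin n → ℝ) : 0 ≤ x ⬝ᵥ (diagonal d *ᵥ x) := by
  rw [quad_eq_sum]
  exact Finset.sum_nonneg fun i _ => mul_nonneg (hd i).le (sq_nonneg _)

theorem coord_le_quad (hd : ∀ i, 0 < d i) (x : Fin n → ℝ) (i : Fin n) :
    d i * x i ^ 2 ≤ x ⬝ᵥ (diagonal d *ᵥ x) := by
  rw [quad_eq_sum]
  exact Finset.single_le_sum (f := fun i => d i * x i ^ 2)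
    (fun i _ => mul_nonneg (hd i).le (sq_nonneg _)) (Finset.mem_univ i)

theorem norm_le_of_quad (hd : ∀ i, 0 < d i) {x : Fin n → ℝ} {H : ℝ}
    (h : x ⬝ᵥ (diagonal d *ᵥ x) ≤ H) : ‖x‖ ≤ ∑ i, √(H / d i) := by
  refine (pi_norm_le_iff_of_nonneg (Finset.sum_nonneg fun i _ => Real.sqrt_nonneg _)).2
    fun i => ?_
  have h1 : |x i| ≤ √(H / d i) := by
    refine Real.abs_le_sqrt ?_
    rw [le_div_iff₀ (hd i), mul_comm]
    exact (coord_le_quad hd x i).trans h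
  exact h1.trans (Finset.single_le_sum (f := fun i => √(H / d i))
    (fun i _ => Real.sqrt_nonneg _) (Finset.mem_univ i))

theorem eq_zero_of_quad (hd : ∀ i, 0 < d i) {x : Fin n → ℝ}
    (h : x ⬝ᵥ (diagonal d *ᵥ x) = 0) : x = 0 := by
  funext i
  have h1 := coord_le_quad hd x i
  have h2 : x i ^ 2 = 0 := by nlinarith [hd i, sq_nonneg (x i)]
  simpa using h2

theorem diag_symm (x y : Fin n → ℝ) :
    x ⬝ᵥ (diagonal d *ᵥ y) = y ⬝ᵥ (diagonal d *ᵥ x) := by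
  simp only [dotProduct, mulVec_diagonal]
  exact Finset.sum_congr rfl fun i _ => by ring

theorem hasDerivAt_quad {u : ℝ → Fin n → ℝ} {u' : Fin n → ℝ} {t : ℝ} (h : HasDerivAt u u' t) :
    HasDerivAt (fun s => u s ⬝ᵥ (diagonal d *ᵥ u s)) (2 * (u' ⬝ᵥ (diagonal d *ᵥ u t))) t := by
  simp only [dotProduct, mulVec_diagonal]
  rw [hasDerivAt_pi] at h
  refine (HasDerivAt.fun_sum (u := Finset.univ) fun i _ =>
    (h i).mul ((h i).const_mul (d i))).congr_deriv ?_
  rw [Finset.mul_sum]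
  exact Finset.sum_congr rfl fun i _ => by ring

theorem diag_inv_cancel (hd : ∀ i, 0 < d i) (x : Fin n → ℝ) :
    diagonal d *ᵥ (diagonal d⁻¹ *ᵥ x) = x := by
  funext i
  simp [mulVec_diagonal, (hd i).ne']

theorem inv_diag_cancel (hd : ∀ i, 0 < d i) (x : Fin n → ℝ) :
    diagonal d⁻¹ *ᵥ (diagonal d *ᵥ x) = x := by
  funext i
  simp only [mulVec_diagonal, Pi.inv_apply, inv_mul_cancel_left₀ (hd i).ne']

/-- A vector whose `d`-weighted version is a multiple of `𝟙` and whose entries sum to zero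
vanishes. -/
theorem eq_zero_of_mem_span (hd : ∀ i, 0 < d i) {x : Fin n → ℝ}
    (h : diagonal d *ᵥ x ∈ Submodule.span ℝ {(fun _ => 1 : Fin n → ℝ)})
    (h1 : (fun _ => 1 : Fin n → ℝ) ⬝ᵥ x = 0) : x = 0 := by
  obtain ⟨a, ha⟩ := Submodule.mem_span_singleton.1 h
  refine eq_zero_of_quad hd ?_
  rw [← ha, dotProduct_smul, dotProduct_comm, h1, smul_zero]

end Diagonal

section Springs

variable {N M : ℕ} {B : Matrix (Fin N) (Fin M) ℝ} {k : Fin M → ℝ}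

theorem dotProduct_mulVec_eq_transpose (B : Matrix (Fin N) (Fin M) ℝ) (z : Fin N → ℝ)
    (y : Fin M → ℝ) :
    z ⬝ᵥ (B *ᵥ y) = (Bᵀ *ᵥ z) ⬝ᵥ y := by
  rw [dotProduct_mulVec, mulVec_transpose]

theorem transpose_eq_zero_of_laplacian (hk : ∀ i, 0 < k i) {z : Fin N → ℝ}
    (h : B *ᵥ (diagonal k *ᵥ (Bᵀ *ᵥ z)) = 0) : Bᵀ *ᵥ z = 0 := by
  refine eq_zero_of_quad hk ?_
  rw [← dotProduct_mulVec_eq_transpose, h, dotProduct_zero]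

/-- The weighted Laplacian `B K Bᵀ` has the same range as `B`: its kernel is that of `Bᵀ`, so
the ranks agree. -/
theorem range_laplacian (hk : ∀ i, 0 < k i) :
    LinearMap.range (B * diagonal k * Bᵀ).mulVecLin = LinearMap.range B.mulVecLin := by
  refine Submodule.eq_of_le_of_finrank_eq ?_ ?_
  · rintro _ ⟨z, rfl⟩
    exact ⟨diagonal k *ᵥ (Bᵀ *ᵥ z), by simp only [mulVecLin_apply, ← mulVec_mulVec]⟩
  · have hker : LinearMap.ker (B * diagonal k * Bᵀ).mulVecLin =
        LinearMap.ker (Bᵀ).mulVecLin := by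
      ext z
      simp only [LinearMap.mem_ker, mulVecLin_apply, ← mulVec_mulVec]
      exact ⟨transpose_eq_zero_of_laplacian hk, fun h => by rw [h]; simp⟩
    have h1 := LinearMap.finrank_range_add_finrank_ker (B * diagonal k * Bᵀ).mulVecLin
    have h2 := LinearMap.finrank_range_add_finrank_ker (Bᵀ).mulVecLin
    have h3 : Module.finrank ℝ (LinearMap.range (Bᵀ).mulVecLin) =
      Module.finrank ℝ (LinearMap.range B.mulVecLin) := rank_transpose B
    rw [hker] at h1
    omega

/-- Existence and uniqueness of the equilibrium determined by an initial condition. -/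
theorem existsUnique_equilibrium {g : Fin N → ℝ} (hk : ∀ i, 0 < k i) (hg : ∀ i, 0 < g i)
    {e : Fin N → ℝ} (he : e ∈ LinearMap.range B.mulVecLin) (q0 : Fin M → ℝ) (p0 : Fin N → ℝ) :
    ∃! x : (Fin M → ℝ) × (Fin N → ℝ),
      B *ᵥ (diagonal k *ᵥ x.1) = e ∧
      diagonal g *ᵥ x.2 ∈ Submodule.span ℝ {(fun _ => 1 : Fin N → ℝ)} ∧
      q0 - x.1 ∈ LinearMap.range (Bᵀ).mulVecLin ∧
      (fun _ => 1 : Fin N → ℝ) ⬝ᵥ x.2 = (fun _ => 1 : Fin N → ℝ) ⬝ᵥ p0 := by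
  have hz : B *ᵥ (diagonal k *ᵥ q0) - e ∈ LinearMap.range (B * diagonal k * Bᵀ).mulVecLin := by
    rw [range_laplacian hk]
    exact Submodule.sub_mem _ ⟨_, rfl⟩ he
  obtain ⟨z, hz⟩ := hz
  have hz' : B *ᵥ (diagonal k *ᵥ (Bᵀ *ᵥ z)) = B *ᵥ (diagonal k *ᵥ q0) - e := by
    simpa only [mulVecLin_apply, ← mulVec_mulVec] using hz
  -- If the masses are absent (`N = 0`) the quotient defining `a` is `0 / 0 = 0`.
  obtain ⟨a, ha⟩ : ∃ a : ℝ, a * ∑ i, (g i)⁻¹ = ∑ i, p0 i := by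
    rcases isEmpty_or_nonempty (Fin N) with hN | hN
    · exact ⟨0, by simp⟩
    · have : 0 < ∑ i, (g i)⁻¹ :=
        Finset.sum_pos (fun i _ => inv_pos.2 (hg i)) Finset.univ_nonempty
      exact ⟨(∑ i, p0 i) / ∑ i, (g i)⁻¹, div_mul_cancel₀ _ this.ne'⟩
  refine ⟨(q0 - Bᵀ *ᵥ z, diagonal g⁻¹ *ᵥ (a • fun _ => 1)), ⟨?_, ?_, ?_, ?_⟩, ?_⟩
  · simp only [mulVec_sub, hz']; abel
  · rw [diag_inv_cancel hg]
    exact Submodule.smul_mem _ _ (Submodule.mem_span_singleton_self _)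
  · exact ⟨z, by rw [sub_sub_cancel, mulVecLin_apply]⟩
  · simp only [dotProduct, mulVec_diagonal, one_mul, ← ha, Finset.mul_sum]
    exact Finset.sum_congr rfl fun i _ => by simp [mul_comm]
  · rintro ⟨x, y⟩ ⟨h1, h2, ⟨s, h3⟩, h4⟩
    refine Prod.ext ?_ ?_
    · have hs : Bᵀ *ᵥ s = q0 - x := h3
      have h5 : Bᵀ *ᵥ (s - z) = 0 := by
        refine transpose_eq_zero_of_laplacian hk ?_
        simp only [mulVec_sub, hz', hs] at h1 ⊢
        rw [h1]; abel
      rw [mulVec_sub, hs] at h5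
      change x = q0 - Bᵀ *ᵥ z
      rw [← sub_eq_zero.1 h5]; abel
    · refine sub_eq_zero.1 (eq_zero_of_mem_span hg ?_ ?_)
      · rw [mulVec_sub, diag_inv_cancel hg]
        exact Submodule.sub_mem _ h2
          (Submodule.smul_mem _ _ (Submodule.mem_span_singleton_self _))
      · rw [dotProduct_sub, sub_eq_zero]
        refine h4.trans ?_
        simp only [dotProduct, mulVec_diagonal, one_mul, ← ha, Finset.mul_sum]
        exact Finset.sum_congr rfl fun i _ => by simp [mul_comm]

end Springs

section Network

variable {N Ms Md : ℕ} {Bs : Matrix (Fin N) (Fin Ms) ℝ} {Bd : Matrix (Fin N) (Fin Md) ℝ}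
  {k : Fin Ms → ℝ} {g : Fin N → ℝ} {r : Fin Md → ℝ}

theorem transpose_ones
    (hconn : LinearMap.ker (Bsᵀ).mulVecLin ⊓ LinearMap.ker (Bdᵀ).mulVecLin =
      Submodule.span ℝ {(fun _ => 1 : Fin N → ℝ)}) :
    Bsᵀ *ᵥ (fun _ => 1) = 0 ∧ Bdᵀ *ᵥ (fun _ => 1) = 0 := by
  have h : (fun _ => 1 : Fin N → ℝ) ∈
      LinearMap.ker (Bsᵀ).mulVecLin ⊓ LinearMap.ker (Bdᵀ).mulVecLin := by
    rw [hconn]; exact Submodule.mem_span_singleton_self _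
  exact h

theorem transpose_of_mem_span {B : Matrix (Fin N) (Fin Ms) ℝ} (h : Bᵀ *ᵥ (fun _ => 1) = 0)
    {v : Fin N → ℝ} (hv : v ∈ Submodule.span ℝ {(fun _ => 1 : Fin N → ℝ)}) :
    Bᵀ *ᵥ v = 0 := by
  obtain ⟨a, rfl⟩ := Submodule.mem_span_singleton.1 hv
  rw [mulVec_smul, h, smul_zero]

/-- Energy balance: the springs exchange energy with the masses without loss, so only the
dampers dissipate. -/
theorem power_balance (x : Fin Ms → ℝ) (y : Fin N → ℝ) :
    (Bsᵀ *ᵥ (diagonal g *ᵥ y)) ⬝ᵥ (diagonal k *ᵥ x) +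
      (-(Bs *ᵥ (diagonal k *ᵥ x)) - (Bd * diagonal r * Bdᵀ) *ᵥ (diagonal g *ᵥ y)) ⬝ᵥ
        (diagonal g *ᵥ y) =
      -((Bdᵀ *ᵥ (diagonal g *ᵥ y)) ⬝ᵥ (diagonal r *ᵥ (Bdᵀ *ᵥ (diagonal g *ᵥ y)))) := by
  rw [← dotProduct_mulVec_eq_transpose, ← dotProduct_mulVec_eq_transpose,
    dotProduct_comm _ (diagonal g *ᵥ y), dotProduct_sub, dotProduct_neg,
    ← mulVec_mulVec, ← mulVec_mulVec]
  ring

/-- The undisturbed dynamics is asymptotically stable on `range Bsᵀ × 𝟙^⊥` under the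
invariant-subspace condition. -/
theorem homogeneous_tendsto
    (hk : ∀ i, 0 < k i) (hg : ∀ i, 0 < g i) (hr : ∀ i, 0 < r i)
    (hs1 : Bsᵀ *ᵥ (fun _ => 1) = 0) (hd1 : Bdᵀ *ᵥ (fun _ => 1) = 0)
    (hV : ∀ V : Submodule ℝ (Fin N → ℝ),
        (∀ v ∈ V, (diagonal g * (Bs * diagonal k * Bsᵀ)) *ᵥ v ∈ V) →
        V ≤ LinearMap.ker (Bdᵀ).mulVecLin →
        V ≤ Submodule.span ℝ {(fun _ => 1 : Fin N → ℝ)})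
    {x : ℝ → Fin Ms → ℝ} {y : ℝ → Fin N → ℝ}
    (hx : ∀ t, HasDerivAt x (Bsᵀ *ᵥ (diagonal g *ᵥ y t)) t)
    (hy : ∀ t, HasDerivAt y (-(Bs *ᵥ (diagonal k *ᵥ x t)) -
      (Bd * diagonal r * Bdᵀ) *ᵥ (diagonal g *ᵥ y t)) t)
    (hx0 : x 0 ∈ LinearMap.range (Bsᵀ).mulVecLin)
    (hy0 : (fun _ => 1 : Fin N → ℝ) ⬝ᵥ y 0 = 0) :
    Tendsto (fun t => (x t, y t)) atTop (nhds 0) := by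
  let X := (Fin Ms → ℝ) × (Fin N → ℝ)
  let w : ℝ → X := fun t => (x t, y t)
  let Lg := (diagonal g).mulVecLin ∘ₗ LinearMap.snd ℝ (Fin Ms → ℝ) (Fin N → ℝ)
  let A : X →ₗ[ℝ] X := LinearMap.prod ((Bsᵀ).mulVecLin ∘ₗ Lg)
    (-(Bs.mulVecLin ∘ₗ (diagonal k).mulVecLin ∘ₗ LinearMap.fst ℝ _ _) -
      (Bd * diagonal r * Bdᵀ).mulVecLin ∘ₗ Lg)
  have hA : ∀ u : X, A u = (Bsᵀ *ᵥ (diagonal g *ᵥ u.2), -(Bs *ᵥ (diagonal k *ᵥ u.1)) -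
      (Bd * diagonal r * Bdᵀ) *ᵥ (diagonal g *ᵥ u.2)) := fun u => rfl
  have hw : ∀ t, HasDerivAt w (A (w t)) t := fun t => (hx t).prodMk (hy t)
  let c : Fin Md → Module.Dual ℝ X := fun j => LinearMap.proj j ∘ₗ (Bdᵀ).mulVecLin ∘ₗ Lg
  have hc : ∀ u : X, (fun j => c j u) = Bdᵀ *ᵥ (diagonal g *ᵥ u.2) := fun u => rfl
  -- Twice the energy.
  let H : ℝ → ℝ := fun t => x t ⬝ᵥ (diagonal k *ᵥ x t) + y t ⬝ᵥ (diagonal g *ᵥ y t)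
  let D : ℝ → ℝ := fun t => (fun j => c j (w t)) ⬝ᵥ (diagonal r *ᵥ fun j => c j (w t))
  have hH : ∀ t, HasDerivAt H (-2 * D t) t := fun t => by
    refine ((hasDerivAt_quad (hx t)).add (hasDerivAt_quad (hy t))).congr_deriv ?_
    rw [← mul_add, power_balance]
    simp only [D, hc, w]
    ring
  have hD0 : ∀ t, 0 ≤ D t := fun t => quad_nonneg hr _
  have hanti : Antitone H := antitone_of_hasDerivAt_nonpos hH fun t => by
    have := hD0 t
    simp only [Pi.zero_apply]; linarith
  have hH0 : ∀ t, 0 ≤ H t := fun t => add_nonneg (quad_nonneg hk _) (quad_nonneg hg _)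
  have hbd : ∀ ℓ : Module.Dual ℝ X, ∃ C, ∀ t, 0 ≤ t → |ℓ (w t)| ≤ C := fun ℓ => by
    refine ⟨‖LinearMap.toContinuousLinearMap ℓ‖ *
      max (∑ i, √(H 0 / k i)) (∑ i, √(H 0 / g i)), fun t ht => ?_⟩
    refine ((LinearMap.toContinuousLinearMap ℓ).le_opNorm (w t)).trans
      (mul_le_mul_of_nonneg_left ?_ (norm_nonneg _))
    have h0 : H t ≤ H 0 := hanti ht
    have h1 := quad_nonneg hk (x t)
    have h2 := quad_nonneg hg (y t)
    simp only [H] at h0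
    exact max_le_max (norm_le_of_quad hk (by simp only [H]; linarith))
      (norm_le_of_quad hg (by simp only [H]; linarith))
  -- The dissipation tends to zero, hence so does the elongation rate of each damper.
  have hD : Tendsto (fun t => -2 * D t) atTop (nhds 0) := by
    have hHlim := tendsto_atTop_ciInf hanti ⟨0, by rintro _ ⟨t, rfl⟩; exact hH0 t⟩
    choose C₁ hC₁ using fun j => hbd (c j)
    choose C₂ hC₂ using fun j => hbd (c j ∘ₗ A)
    have hD' : ∀ t, HasDerivAt (fun t => -2 * D t)
        (-2 * (2 * ((fun j => c j (A (w t))) ⬝ᵥ (diagonal r *ᵥ fun j => c j (w t))))) t :=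
      fun t => (hasDerivAt_quad
        (hasDerivAt_pi.2 fun j => hasDerivAt_dual (c j) (hw t))).const_mul (-2)
    refine tendsto_deriv_zero hH hD' (M := 4 * ∑ j, C₂ j * (r j * C₁ j)) (fun t ht => ?_) hHlim
    rw [← mul_assoc, abs_mul]
    norm_num only [abs_neg, abs_of_pos]
    refine mul_le_mul_of_nonneg_left ?_ (by norm_num)
    simp only [dotProduct, mulVec_diagonal]
    refine (Finset.abs_sum_le_sum_abs _ _).trans (Finset.sum_le_sum fun j _ => ?_)
    rw [abs_mul, abs_mul, abs_of_pos (hr j)]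
    have h1 := hC₁ j t ht
    have h2 : |c j (A (w t))| ≤ C₂ j := hC₂ j t ht
    exact mul_le_mul h2 (mul_le_mul_of_nonneg_left h1 (hr j).le)
      (mul_nonneg (hr j).le (abs_nonneg _)) ((abs_nonneg _).trans h2)
  have hcT : ∀ j, Tendsto (fun t => c j (w t)) atTop (nhds 0) := fun j => by
    have hD2 : Tendsto (fun t => √(D t / r j)) atTop (nhds 0) := by
      have h1 : Tendsto (fun t => D t / r j) atTop (nhds 0) := by
        have := hD.const_mul (-(1 / 2) / r j)
        rw [mul_zero] at this
        exact this.congr fun t => by ring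
      simpa using h1.sqrt
    refine squeeze_zero_norm (fun t => ?_) hD2
    refine Real.abs_le_sqrt ?_
    rw [le_div_iff₀ (hr j), mul_comm]
    exact coord_le_quad hr (fun j => c j (w t)) j
  -- Functionals that vanish on `range Bsᵀ`, and the total momentum, are conserved.
  have hxr : ∀ φ ∈ (LinearMap.range (Bsᵀ).mulVecLin).dualAnnihilator, ∀ t, φ (x t) = 0 := by
    intro φ hφ t
    rw [Submodule.mem_dualAnnihilator] at hφ
    have hder : ∀ t, HasDerivAt (fun t => φ (x t)) 0 t := fun t =>
      (hasDerivAt_dual φ (hx t)).congr_deriv (hφ _ ⟨_, rfl⟩)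
    rw [← hφ _ hx0]
    exact is_const_of_deriv_eq_zero (fun t => (hder t).differentiableAt)
      (fun t => (hder t).deriv) t 0
  let σ : Module.Dual ℝ (Fin N → ℝ) := dotProductBilin ℝ ℝ (fun _ => 1)
  have hσ : ∀ v, σ v = (fun _ => 1 : Fin N → ℝ) ⬝ᵥ v := fun v => rfl
  have hyσ : ∀ t, σ (y t) = 0 := by
    intro t
    have hder : ∀ t, HasDerivAt (fun t => σ (y t)) 0 t := fun t =>
      (hasDerivAt_dual σ (hy t)).congr_deriv (by
        rw [hσ, dotProduct_sub, dotProduct_neg, ← mulVec_mulVec, ← mulVec_mulVec,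
          dotProduct_mulVec_eq_transpose Bs, dotProduct_mulVec_eq_transpose Bd, hs1, hd1]
        simp)
    rw [← hy0, ← hσ]
    exact is_const_of_deriv_eq_zero (fun t => (hder t).differentiableAt)
      (fun t => (hder t).deriv) t 0
  have key := tendsto_zero_of_observable A w hw hbd ?_
  · refine Tendsto.prodMk_nhds (tendsto_pi_nhds.2 fun i => ?_) (tendsto_pi_nhds.2 fun i => ?_)
    · exact key (LinearMap.proj i ∘ₗ LinearMap.fst ℝ _ _)
    · exact key (LinearMap.proj i ∘ₗ LinearMap.snd ℝ _ _)
  intro Z hZA hZ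
  have hZc : ∀ u ∈ Z, Bdᵀ *ᵥ (diagonal g *ᵥ u.2) = 0 := fun u hu =>
    funext fun j => hZ (c j) (hcT j) u hu
  have hA' : ∀ u ∈ Z, A u = (Bsᵀ *ᵥ (diagonal g *ᵥ u.2), -(Bs *ᵥ (diagonal k *ᵥ u.1))) :=
    fun u hu => by
      rw [hA, ← mulVec_mulVec, hZc u hu, mulVec_zero, sub_zero]
  have hZx : ∀ u ∈ Z, u.1 ∈ LinearMap.range (Bsᵀ).mulVecLin := fun u hu => by
    rw [← Subspace.forall_mem_dualAnnihilator_apply_eq_zero_iff]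
    intro φ hφ
    exact hZ (φ ∘ₗ LinearMap.fst ℝ _ _)
      (tendsto_const_nhds.congr fun t => (hxr φ hφ t).symm) u hu
  have hZσ : ∀ u ∈ Z, (fun _ => 1 : Fin N → ℝ) ⬝ᵥ u.2 = 0 := fun u hu =>
    hZ (σ ∘ₗ LinearMap.snd ℝ _ _) (tendsto_const_nhds.congr fun t => (hyσ t).symm) u hu
  -- The velocities `G y` occurring in `Z` form an invariant subspace invisible to the dampers.
  have hZy : ∀ u ∈ Z, u.2 = 0 := fun u hu => by
    refine eq_zero_of_mem_span hg ?_ (hZσ u hu)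
    refine hV (Z.map Lg) ?_ ?_ (Submodule.mem_map_of_mem hu)
    · rintro _ ⟨u, hu, rfl⟩
      have h1 := hZA _ (Z.neg_mem (hZA u hu))
      refine ⟨_, h1, ?_⟩
      change diagonal g *ᵥ (A (-A u)).2 = _ *ᵥ (diagonal g *ᵥ u.2)
      rw [hA' _ (Z.neg_mem (hZA u hu)), hA' u hu]
      change diagonal g *ᵥ (-(Bs *ᵥ (diagonal k *ᵥ (-(Bsᵀ *ᵥ (diagonal g *ᵥ u.2)))))) = _
      simp only [mulVec_neg, neg_neg, ← mulVec_mulVec]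
    · rintro _ ⟨u, hu, rfl⟩
      exact hZc u hu
  rw [Submodule.eq_bot_iff]
  intro u hu
  refine Prod.ext ?_ (hZy u hu)
  obtain ⟨z, hz⟩ := hZx u hu
  have h1 := hZy _ (hZA u hu)
  rw [hA' u hu, ← hz] at h1
  rw [← hz]
  exact transpose_eq_zero_of_laplacian hk (neg_eq_zero.1 h1)

/-- If every disturbed solution converges to its equilibrium, the invariant-subspace condition
holds. A vector `v` of a `G Ls`-invariant subspace `V ⊆ ker Bdᵀ` starts an undamped motion
`q = q̄ + Bsᵀ z`, `p = G⁻¹ ż` with `d²z/dt² = -G Ls z` inside `V`. Its energy is conserved, so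
convergence leaves no energy in the difference between `G⁻¹ v` and its limit. -/
theorem invariant_le_span (hk : ∀ i, 0 < k i) (hg : ∀ i, 0 < g i)
    {e : Fin N → ℝ} (he : e ∈ LinearMap.range Bs.mulVecLin)
    (hconv : ∀ (q : ℝ → Fin Ms → ℝ) (p : ℝ → Fin N → ℝ),
        (∀ t, HasDerivAt q (Bsᵀ *ᵥ (diagonal g *ᵥ p t)) t) →
        (∀ t, HasDerivAt p
          (-(Bs *ᵥ (diagonal k *ᵥ q t)) -
            (Bd * diagonal r * Bdᵀ) *ᵥ (diagonal g *ᵥ p t) + e) t) →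
        ∀ (qinf : Fin Ms → ℝ) (pinf : Fin N → ℝ),
          Bs *ᵥ (diagonal k *ᵥ qinf) = e →
          diagonal g *ᵥ pinf ∈ Submodule.span ℝ {(fun _ => 1 : Fin N → ℝ)} →
          q 0 - qinf ∈ LinearMap.range (Bsᵀ).mulVecLin →
          (fun _ => 1 : Fin N → ℝ) ⬝ᵥ pinf = (fun _ => 1 : Fin N → ℝ) ⬝ᵥ p 0 →
          Tendsto (fun t => (q t, p t)) atTop (nhds (qinf, pinf)))
    (V : Submodule ℝ (Fin N → ℝ))
    (hVA : ∀ v ∈ V, (diagonal g * (Bs * diagonal k * Bsᵀ)) *ᵥ v ∈ V)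
    (hVd : V ≤ LinearMap.ker (Bdᵀ).mulVecLin) :
    V ≤ Submodule.span ℝ {(fun _ => 1 : Fin N → ℝ)} := by
  intro v hv
  let T : V →ₗ[ℝ] V := (diagonal g * (Bs * diagonal k * Bsᵀ)).mulVecLin.restrict hVA
  obtain ⟨u, hu0, hu⟩ := exists_linear_flow
    (LinearMap.prod (LinearMap.snd ℝ V V) (-(T ∘ₗ LinearMap.fst ℝ V V))) (0, ⟨v, hv⟩)
  let p0 : Fin N → ℝ := diagonal g⁻¹ *ᵥ v
  obtain ⟨⟨qinf, pinf⟩, ⟨hq, hspan, -, hone⟩, -⟩ :=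
    existsUnique_equilibrium hk hg he (0 : Fin Ms → ℝ) p0
  simp only at hq hspan hone
  let Q : (V × V) →ₗ[ℝ] (Fin Ms → ℝ) := (Bsᵀ).mulVecLin ∘ₗ V.subtype ∘ₗ LinearMap.fst ℝ V V
  let P : (V × V) →ₗ[ℝ] (Fin N → ℝ) :=
    (diagonal g⁻¹).mulVecLin ∘ₗ V.subtype ∘ₗ LinearMap.snd ℝ V V
  have hgP : ∀ z, diagonal g *ᵥ P z = z.2 := fun z => diag_inv_cancel hg _
  have hx : ∀ t, HasDerivAt (fun t => Q (u t)) (Bsᵀ *ᵥ (diagonal g *ᵥ P (u t))) t := fun t => by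
    rw [hgP]
    exact (LinearMap.toContinuousLinearMap Q).hasFDerivAt.comp_hasDerivAt t (hu t)
  have hy : ∀ t, HasDerivAt (fun t => P (u t)) (-(Bs *ᵥ (diagonal k *ᵥ Q (u t))) -
      (Bd * diagonal r * Bdᵀ) *ᵥ (diagonal g *ᵥ P (u t))) t := fun t => by
    have hd : Bdᵀ *ᵥ ((u t).2 : Fin N → ℝ) = 0 := hVd (u t).2.2
    rw [hgP, ← mulVec_mulVec, hd, mulVec_zero, sub_zero]
    refine ((LinearMap.toContinuousLinearMap P).hasFDerivAt.comp_hasDerivAt t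
      (hu t)).congr_deriv ?_
    change diagonal g⁻¹ *ᵥ (-((diagonal g * (Bs * diagonal k * Bsᵀ)) *ᵥ ((u t).1 : Fin N → ℝ)))
      = -(Bs *ᵥ (diagonal k *ᵥ (Bsᵀ *ᵥ ((u t).1 : Fin N → ℝ))))
    simp only [mulVec_neg, ← mulVec_mulVec, inv_diag_cancel hg]
  have hP0 : P (u 0) = p0 := by rw [hu0]; rfl
  have hQ0 : Q (u 0) = 0 := by rw [hu0]; exact map_zero (Bsᵀ).mulVecLin
  have hlim := hconv (fun t => Q (u t) + qinf) (fun t => P (u t))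
    (fun t => (hx t).add_const qinf) (fun t => (hy t).congr_deriv (by
      rw [mulVec_add, mulVec_add, hq]; abel)) qinf pinf hq hspan
    (by simp [hQ0]) (by simp only [hP0]; exact hone)
  -- Twice the energy, a conserved quantity.
  let H : (Fin Ms → ℝ) × (Fin N → ℝ) → ℝ := fun z =>
    (z.1 - qinf) ⬝ᵥ (diagonal k *ᵥ (z.1 - qinf)) + z.2 ⬝ᵥ (diagonal g *ᵥ z.2)
  have hHc : Continuous H := by fun_prop
  have hder : ∀ t, HasDerivAt (fun t => H (Q (u t) + qinf, P (u t))) 0 t := fun t => by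
    simp only [H, add_sub_cancel_right]
    refine ((hasDerivAt_quad (hx t)).add (hasDerivAt_quad (hy t))).congr_deriv ?_
    have hd : Bdᵀ *ᵥ ((u t).2 : Fin N → ℝ) = 0 := hVd (u t).2.2
    rw [← mul_add, power_balance, hgP, hd]
    simp
  have hconst : ∀ t, H (Q (u t) + qinf, P (u t)) = p0 ⬝ᵥ (diagonal g *ᵥ p0) := fun t => by
    rw [is_const_of_deriv_eq_zero (fun t => (hder t).differentiableAt)
      (fun t => (hder t).deriv) t 0]
    simp [H, hQ0, hP0]
  have hE : pinf ⬝ᵥ (diagonal g *ᵥ pinf) = p0 ⬝ᵥ (diagonal g *ᵥ p0) := by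
    have h1 := (hHc.tendsto (qinf, pinf)).comp hlim
    have h2 := tendsto_nhds_unique h1
      (tendsto_const_nhds.congr fun t => (hconst t).symm)
    simpa [H] using h2
  -- `G p∞` is a multiple of `𝟙`, so `p₀ - p∞` is orthogonal to it and Pythagoras applies.
  obtain ⟨a, ha⟩ := Submodule.mem_span_singleton.1 hspan
  have hcross : p0 ⬝ᵥ (diagonal g *ᵥ pinf) = pinf ⬝ᵥ (diagonal g *ᵥ pinf) := by
    rw [← ha, dotProduct_smul, dotProduct_smul, dotProduct_comm p0, dotProduct_comm pinf, hone]
  have hzero : p0 - pinf = 0 := by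
    refine eq_zero_of_quad hg ?_
    rw [mulVec_sub, dotProduct_sub, sub_dotProduct, sub_dotProduct, hcross,
      diag_symm pinf p0, hcross, hE]
    ring
  have : v = diagonal g *ᵥ pinf := by
    rw [← sub_eq_zero.1 hzero]; exact (diag_inv_cancel hg v).symm
  rw [this]; exact hspan

end Network


/-- Robustness of a linear mass-spring-damper system with respect to a constant
disturbance force `E f̄_b ∈ range B_s`: (i) every initial condition determines a unique
controlled equilibrium `(q̄_∞,p_∞)`, and (ii) every solution of
`q̇ = B_sᵀGp, ṗ = −B_sKq − B_dRB_dᵀGp + E f̄_b` converges to it if and only if the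
largest `GL_s`-invariant subspace contained in `ker B_dᵀ` equals `span{𝟙}`. -/
theorem robustness_constant_disturbance
    (N Ms Md nb : ℕ)
    (Bs : Matrix (Fin N) (Fin Ms) ℝ) (Bd : Matrix (Fin N) (Fin Md) ℝ)
    (k : Fin Ms → ℝ) (g : Fin N → ℝ) (r : Fin Md → ℝ)
    (hk : ∀ i, 0 < k i) (hg : ∀ i, 0 < g i) (hr : ∀ i, 0 < r i)
    (hconn : LinearMap.ker (Bsᵀ).mulVecLin ⊓ LinearMap.ker (Bdᵀ).mulVecLin =
      Submodule.span ℝ {(fun _ => 1 : Fin N → ℝ)})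
    (E : Matrix (Fin N) (Fin nb) ℝ) (fb : Fin nb → ℝ)
    (hEfb : E *ᵥ fb ∈ LinearMap.range Bs.mulVecLin) :
    (∀ (q0 : Fin Ms → ℝ) (p0 : Fin N → ℝ),
      ∃! x : (Fin Ms → ℝ) × (Fin N → ℝ),
        Bs *ᵥ (diagonal k *ᵥ x.1) = E *ᵥ fb ∧
        diagonal g *ᵥ x.2 ∈ Submodule.span ℝ {(fun _ => 1 : Fin N → ℝ)} ∧
        q0 - x.1 ∈ LinearMap.range (Bsᵀ).mulVecLin ∧
        (fun _ => 1 : Fin N → ℝ) ⬝ᵥ x.2 = (fun _ => 1 : Fin N → ℝ) ⬝ᵥ p0) ∧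
    ((∀ (q : ℝ → Fin Ms → ℝ) (p : ℝ → Fin N → ℝ),
        (∀ t, HasDerivAt q (Bsᵀ *ᵥ (diagonal g *ᵥ p t)) t) →
        (∀ t, HasDerivAt p
          (-(Bs *ᵥ (diagonal k *ᵥ q t)) -
            (Bd * diagonal r * Bdᵀ) *ᵥ (diagonal g *ᵥ p t) + E *ᵥ fb) t) →
        ∀ (qinf : Fin Ms → ℝ) (pinf : Fin N → ℝ),
          Bs *ᵥ (diagonal k *ᵥ qinf) = E *ᵥ fb →
          diagonal g *ᵥ pinf ∈ Submodule.span ℝ {(fun _ => 1 : Fin N → ℝ)} →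
          q 0 - qinf ∈ LinearMap.range (Bsᵀ).mulVecLin →
          (fun _ => 1 : Fin N → ℝ) ⬝ᵥ pinf = (fun _ => 1 : Fin N → ℝ) ⬝ᵥ p 0 →
          Tendsto (fun t => (q t, p t)) atTop (nhds (qinf, pinf))) ↔
      (∀ V : Submodule ℝ (Fin N → ℝ),
        (∀ v ∈ V, (diagonal g * (Bs * diagonal k * Bsᵀ)) *ᵥ v ∈ V) →
        V ≤ LinearMap.ker (Bdᵀ).mulVecLin →
        V ≤ Submodule.span ℝ {(fun _ => 1 : Fin N → ℝ)})) := by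
  obtain ⟨hs1, hd1⟩ := transpose_ones hconn
  refine ⟨existsUnique_equilibrium hk hg hEfb, invariant_le_span hk hg hEfb, ?_⟩
  intro hV q p hq hp qinf pinf hqi hpi hq0 hp0
  have hBs : Bsᵀ *ᵥ (diagonal g *ᵥ pinf) = 0 := transpose_of_mem_span hs1 hpi
  have hBd : Bdᵀ *ᵥ (diagonal g *ᵥ pinf) = 0 := transpose_of_mem_span hd1 hpi
  have h := homogeneous_tendsto (x := fun t => q t - qinf) (y := fun t => p t - pinf)
    hk hg hr hs1 hd1 hV
    (fun t => ((hq t).sub_const qinf).congr_deriv (by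
      rw [mulVec_sub, mulVec_sub, hBs, sub_zero]))
    (fun t => ((hp t).sub_const pinf).congr_deriv (by
      have h0 : (Bd * diagonal r * Bdᵀ) *ᵥ (diagonal g *ᵥ pinf) = 0 := by
        rw [← mulVec_mulVec, hBd, mulVec_zero]
      simp only [mulVec_sub, hqi, h0]
      abel))
    hq0 (by rw [dotProduct_sub, hp0, sub_self])
  simpa using h.add_const (qinf, pinf)
end

section
/- Let B_s be a real N × M_s matrix, B_d a real N × M_d matrix, R a diagonal M_d × M_d matrix with positive diagonal entries, E a real N × n_b matrix, f̄_b ∈ ℝ^{n_b}, and H : ℝ^{M_s} × ℝ^N → ℝ continuously differentiable. Suppose q̄ ∈ ℝ^{M_s} satisfies B_s ∇_qH(q̄,0) = E f̄_b, and define the availability function H̄(q,p) := H(q,p) − (q − q̄) ⋅ ∇_qH(q̄,0) − H(q̄,0). Then along any differentiable solution (q,p) of q̇ = B_sᵀ∇_pH(q,p), ṗ = −B_s∇_qH(q,p) − B_dRB_dᵀ∇_pH(q,p) + E f̄_b, one has for all t: (d/dt) H̄(q(t),p(t)) = −∇_pH(q(t),p(t)) ⋅ (B_d R B_dᵀ ∇_pH(q(t),p(t)))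 ≤ 0. -/
/-! By the chain rule `dH/dt = ∇_qH ⋅ q̇ + ∇_pH ⋅ ṗ`. The spring terms cancel because `B_sᵀ` is the
adjoint of `B_s`, leaving `-∇_pH ⋅ (B_dRB_dᵀ∇_pH) + ∇_pH ⋅ (E f̄_b)`. The linear correction
contributes `-(B_sᵀ∇_pH) ⋅ ∇_qH(q̄,0) = -∇_pH ⋅ (B_s∇_qH(q̄,0))`, which cancels the disturbance
by the equilibrium condition. The sign follows from positive semidefiniteness of `B_dRB_dᵀ`. -/

open Matrix

/-- Decay of the availability function: if `B_s∇_qH(q̄,0) = E f̄_b`, then along any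
solution of the disturbed dynamics
`q̇ = B_sᵀ∇_pH, ṗ = −B_s∇_qH − B_dRB_dᵀ∇_pH + E f̄_b`, the availability function
`H̄(q,p) = H(q,p) − (q − q̄)⋅∇_qH(q̄,0) − H(q̄,0)` satisfies
`dH̄/dt = −∇_pH ⋅ (B_dRB_dᵀ∇_pH) ≤ 0`. -/
theorem availability_function_decay
    (N Ms Md nb : ℕ)
    (Bs : Matrix (Fin N) (Fin Ms) ℝ) (Bd : Matrix (Fin N) (Fin Md) ℝ)
    (r : Fin Md → ℝ) (hr : ∀ i, 0 < r i)
    (E : Matrix (Fin N) (Fin nb) ℝ) (fb : Fin nb → ℝ)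
    (H : (Fin Ms → ℝ) × (Fin N → ℝ) → ℝ)
    (gq : (Fin Ms → ℝ) × (Fin N → ℝ) → Fin Ms → ℝ)
    (gp : (Fin Ms → ℝ) × (Fin N → ℝ) → Fin N → ℝ)
    (hH : ContDiff ℝ 1 H)
    (hgrad : ∀ x v, fderiv ℝ H x v = gq x ⬝ᵥ v.1 + gp x ⬝ᵥ v.2)
    (qbar : Fin Ms → ℝ)
    (hqbar : Bs *ᵥ gq (qbar, 0) = E *ᵥ fb)
    (q : ℝ → Fin Ms → ℝ) (p : ℝ → Fin N → ℝ)
    (hq : ∀ t, HasDerivAt q (Bsᵀ *ᵥ gp (q t, p t)) t)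
    (hp : ∀ t, HasDerivAt p
      (-(Bs *ᵥ gq (q t, p t)) - (Bd * diagonal r * Bdᵀ) *ᵥ gp (q t, p t) +
        E *ᵥ fb) t) :
    ∀ t : ℝ,
      HasDerivAt (fun s => H (q s, p s) - (q s - qbar) ⬝ᵥ gq (qbar, 0) - H (qbar, 0))
        (-(gp (q t, p t) ⬝ᵥ ((Bd * diagonal r * Bdᵀ) *ᵥ gp (q t, p t)))) t ∧
      -(gp (q t, p t) ⬝ᵥ ((Bd * diagonal r * Bdᵀ) *ᵥ gp (q t, p t))) ≤ 0 := by
  intro t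
  -- `B_sᵀ` is the adjoint of `B_s` for the dot product.
  have adj : ∀ (u : Fin N → ℝ) (w : Fin Ms → ℝ), (Bsᵀ *ᵥ u) ⬝ᵥ w = u ⬝ᵥ (Bs *ᵥ w) := by
    intro u w
    rw [mulVec_transpose, dotProduct_mulVec]
  constructor
  · have hF : HasFDerivAt H (fderiv ℝ H (q t, p t)) (q t, p t) :=
      (hH.differentiable one_ne_zero _).hasFDerivAt
    have h1 : HasDerivAt (fun s => H (q s, p s)) _ t :=
      hF.comp_hasDerivAt t ((hq t).prodMk (hp t))
    have h2 : HasDerivAt (fun s => (q s - qbar) ⬝ᵥ gq (qbar, 0))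
        ((Bsᵀ *ᵥ gp (q t, p t)) ⬝ᵥ gq (qbar, 0)) t := by
      simp only [dotProduct, Pi.sub_apply]
      exact HasDerivAt.fun_sum fun i _ =>
        ((hasDerivAt_pi.1 (hq t) i).sub_const _).mul_const _
    refine ((h1.sub h2).sub_const (H (qbar, 0))).congr_deriv ?_
    rw [hgrad, adj, hqbar, dotProduct_comm (gq _), adj, dotProduct_add, dotProduct_sub,
      dotProduct_neg]
    ring
  · have hpsd : (Bd * diagonal r * Bdᵀ).PosSemidef := by
      simpa using (PosSemidef.diagonal fun i => (hr i).le).mul_mul_conjTranspose_same Bd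
    simpa using hpsd.dotProduct_mulVec_nonneg (gp (q t, p t))
end

section
/- Let B_i be a real N_i × M matrix and B_b a real N_b × M matrix with N_b ≥ 1, and let W be a diagonal M × M matrix with positive diagonal entries. Assume the graph is connected, i.e. {(x_i,x_b) ∈ ℝ^{N_i} × ℝ^{N_b} : B_iᵀx_i + B_bᵀx_b = 0} = span{(𝟙_{N_i},𝟙_{N_b})}. Then for every constant vector ē ∈ ℝ^{N_b}: (i) there exists a unique p̄ ∈ ℝ^{N_i} such that B_iWB_iᵀ p̄ + B_iWB_bᵀ ē = 0; and (ii) every differentiable p : ℝ → ℝ^{N_i} satisfying ṗ(t) = −B_iWB_iᵀ p(t) − B_iWB_bᵀ ē converges to p̄ as t → ∞. -/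
/-!
The weighted Laplacian block `A = B_i W B_iᵀ` satisfies `xᵀAx = ∑ₖ wₖ (B_iᵀx)ₖ²`, so `xᵀAx = 0`
forces `B_iᵀx = 0`. Then `(x, 0)` lies in the kernel describing connectedness, hence is a
multiple of the all-ones vector, and since there is at least one boundary vertex that multiple is
zero. Thus `A` is positive definite (`posDef_laplacian`), in particular invertible, which gives
the unique equilibrium `p̄`. The error `q = p - p̄` solves `q' = -Aq`; in an orthonormal
eigenbasis of `A` each coordinate is `e^{-λt}` times a constant with `λ > 0`, so `q → 0`
(`tendsto_zero_of_posDef`).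
-/

open Matrix Filter

/-- The internal block of the weighted Laplacian is positive definite. -/
lemma posDef_laplacian {M Ni Nb : ℕ} (hNb : 1 ≤ Nb)
    (Bi : Matrix (Fin Ni) (Fin M) ℝ) (Bb : Matrix (Fin Nb) (Fin M) ℝ)
    (w : Fin M → ℝ) (hw : ∀ i, 0 < w i)
    (hconn : LinearMap.ker ((Biᵀ).mulVecLin.coprod (Bbᵀ).mulVecLin) =
      Submodule.span ℝ
        {((fun _ => 1 : Fin Ni → ℝ), (fun _ => 1 : Fin Nb → ℝ))}) :
    (Bi * diagonal w * Biᵀ).PosDef := by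
  have hinj : Function.Injective Bi.vecMul := by
    refine (injective_iff_map_eq_zero Bi.vecMulLinear).2 fun x hx => ?_
    have hx' : x ᵥ* Bi = 0 := hx
    have hmem : (x, (0 : Fin Nb → ℝ)) ∈
        LinearMap.ker ((Biᵀ).mulVecLin.coprod (Bbᵀ).mulVecLin) := by
      simp [hx']
    rw [hconn, Submodule.mem_span_singleton] at hmem
    obtain ⟨c, hc⟩ := hmem
    obtain ⟨hc1, hc2⟩ := Prod.mk.inj hc
    -- A boundary coordinate, available because `1 ≤ Nb`, shows that the multiple is zero.
    have h0 : c = 0 := by simpa using congrFun hc2 ⟨0, hNb⟩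
    rw [← hc1, h0, zero_smul]
  have := (PosDef.diagonal hw).mul_mul_conjTranspose_same hinj
  rwa [conjTranspose_eq_transpose_of_trivial] at this

/-- The linear system `q' = -Aq` with `A` positive definite is asymptotically stable. -/
lemma tendsto_zero_of_posDef {n : ℕ} {A : Matrix (Fin n) (Fin n) ℝ} (hA : A.PosDef)
    {q : ℝ → Fin n → ℝ} (hq : ∀ t, HasDerivAt q (-(A *ᵥ q t)) t) :
    Tendsto q atTop (nhds 0) := by
  set v := hA.isHermitian.eigenvectorBasis
  set μ := hA.isHermitian.eigenvalues
  have hsymm : Aᵀ = A := by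
    simpa [conjTranspose_eq_transpose_of_trivial] using hA.isHermitian.eq
  have hcoord : ∀ i, Tendsto (fun t => (v i).ofLp ⬝ᵥ q t) atTop (nhds 0) := by
    intro i
    have hy : ∀ t, HasDerivAt (fun t => (v i).ofLp ⬝ᵥ q t) (-(μ i * ((v i).ofLp ⬝ᵥ q t))) t := by
      intro t
      have h1 : HasDerivAt (fun t => (v i).ofLp ⬝ᵥ q t) ((v i).ofLp ⬝ᵥ (-(A *ᵥ q t))) t :=
        HasDerivAt.fun_sum fun j _ => ((hasDerivAt_pi.1 (hq t)) j).const_mul _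
      convert h1 using 1
      rw [dotProduct_neg, dotProduct_mulVec, ← mulVec_transpose, hsymm,
        hA.isHermitian.mulVec_eigenvectorBasis, smul_dotProduct, smul_eq_mul]
    -- The integrating factor `e^{μt}` makes the coordinate constant.
    have hconst : ∀ t, Real.exp (μ i * t) * ((v i).ofLp ⬝ᵥ q t) = (v i).ofLp ⬝ᵥ q 0 := by
      have hd : ∀ t, HasDerivAt (fun t => Real.exp (μ i * t) * ((v i).ofLp ⬝ᵥ q t)) 0 t := by
        intro t
        have he : HasDerivAt (fun t => Real.exp (μ i * t)) (Real.exp (μ i * t) * μ i) t := by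
          simpa using ((hasDerivAt_id t).const_mul (μ i)).exp
        exact (he.mul (hy t)).congr_deriv (by ring)
      intro t
      simpa using is_const_of_deriv_eq_zero (fun s => (hd s).differentiableAt)
        (fun s => (hd s).deriv) t 0
    have hform : (fun t => (v i).ofLp ⬝ᵥ q t) =
        fun t => Real.exp (-(μ i * t)) * ((v i).ofLp ⬝ᵥ q 0) := by
      funext t
      rw [← hconst t, ← mul_assoc, ← Real.exp_add]
      simp
    rw [hform]
    have hexp : Tendsto (fun t => Real.exp (-(μ i * t))) atTop (nhds 0) :=
      Real.tendsto_exp_neg_atTop_nhds_zero.comp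
        (tendsto_id.const_mul_atTop (hA.eigenvalues_pos i))
    simpa using hexp.mul_const ((v i).ofLp ⬝ᵥ q 0)
  have hexpand : ∀ t, q t = ∑ i, ((v i).ofLp ⬝ᵥ q t) • (v i).ofLp := by
    intro t
    have h := congrArg WithLp.ofLp (v.sum_repr' (WithLp.toLp 2 (q t)))
    simpa [EuclideanSpace.inner_eq_star_dotProduct, dotProduct_comm] using h.symm
  rw [funext hexpand]
  simpa using tendsto_finsetSum Finset.univ
    fun i _ => (hcoord i).smul_const (v i).ofLp

/-- Mass-damper / leader–follower consensus system on a connected graph: for every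
constant boundary effort `ē` there is a unique `p̄` with
`B_iWB_iᵀp̄ + B_iWB_bᵀē = 0`, and every solution of
`ṗ = −B_iWB_iᵀp − B_iWB_bᵀē` converges to `p̄`. -/
theorem mass_damper_convergence
    (M Ni Nb : ℕ) (hNb : 1 ≤ Nb)
    (Bi : Matrix (Fin Ni) (Fin M) ℝ) (Bb : Matrix (Fin Nb) (Fin M) ℝ)
    (w : Fin M → ℝ) (hw : ∀ i, 0 < w i)
    (hconn : LinearMap.ker ((Biᵀ).mulVecLin.coprod (Bbᵀ).mulVecLin) =
      Submodule.span ℝ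
        {((fun _ => 1 : Fin Ni → ℝ), (fun _ => 1 : Fin Nb → ℝ))})
    (ebar : Fin Nb → ℝ) :
    (∃! pbar : Fin Ni → ℝ,
        (Bi * diagonal w * Biᵀ) *ᵥ pbar + (Bi * diagonal w * Bbᵀ) *ᵥ ebar = 0) ∧
      ∀ p : ℝ → Fin Ni → ℝ,
        (∀ t, HasDerivAt p
          (-((Bi * diagonal w * Biᵀ) *ᵥ p t) -
            (Bi * diagonal w * Bbᵀ) *ᵥ ebar) t) →
        ∀ pbar : Fin Ni → ℝ,
          (Bi * diagonal w * Biᵀ) *ᵥ pbar + (Bi * diagonal w * Bbᵀ) *ᵥ ebar = 0 →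
          Tendsto p atTop (nhds pbar) := by
  have hA := posDef_laplacian hNb Bi Bb w hw hconn
  set A := Bi * diagonal w * Biᵀ with hAdef
  set b := (Bi * diagonal w * Bbᵀ) *ᵥ ebar with hb
  have hunit : IsUnit A.det := (isUnit_iff_isUnit_det A).1 hA.isUnit
  refine ⟨⟨-(A⁻¹ *ᵥ b), ?_, ?_⟩, ?_⟩
  · simp [mulVec_neg, mulVec_mulVec, mul_nonsing_inv A hunit]
  · intro y hy
    have h1 : A *ᵥ y = -b := eq_neg_of_add_eq_zero_left hy
    rw [← mulVec_neg, ← h1, mulVec_mulVec, nonsing_inv_mul A hunit, one_mulVec]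
  · intro p hp pbar hpbar
    have hq : ∀ t, HasDerivAt (fun t => p t - pbar) (-(A *ᵥ (p t - pbar))) t := by
      intro t
      refine ((hp t).sub_const pbar).congr_deriv ?_
      rw [mulVec_sub, eq_neg_of_add_eq_zero_left hpbar]
      abel
    simpa using (tendsto_zero_of_posDef hA hq).add_const pbar
end
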